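/- arXiv:2411.12881 — 2 statements merged into one kernel-verified Lean document; each statement's English description precedes it below -/
import Mathlib

section
/- Let α,β:[0,1]→ℝⁿ be piecewise smooth loops based at a point p∈ℝⁿ. Then ∫_α dx_{i₁}⋯dx_{i_p} = ∫_β dx_{i₁}⋯dx_{i_p} for every p≥1 and all indices i₁,…,i_p∈{1,…,n} if and only if α and β are thin equivalent within the class of piecewise smooth loops based at p. In particular, the Chen signature map is a faithful representation of the group of piecewise smooth loops at p modulo thin homotopy. -/
open Set MeasureTheory intervalIntegral Topology
open scoped Manifold

noncomputable section

namespace ChenPaper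

/-- A strictly increasing partition `0 = s 0 < s 1 < ⋯ < s k = 1` of `[0,1]`. -/
def IsPartition {k : ℕ} (s : Fin (k + 1) → ℝ) : Prop :=
  s 0 = 0 ∧ s (Fin.last k) = 1 ∧ StrictMono s

variable {E : Type*} [NormedAddCommGroup E] [NormedSpace ℝ E]

/-- A path `γ : [0,1] → E` is piecewise smooth if there is a partition of `[0,1]`
on whose closed subintervals `γ` is `C^∞`. -/
def PiecewiseSmooth (γ : ℝ → E) : Prop :=
  ∃ (k : ℕ) (s : Fin (k + 1) → ℝ), IsPartition s ∧
    ∀ j : Fin k, ContDiffOn ℝ (⊤ : ℕ∞) γ (Icc (s j.castSucc) (s j.succ))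

/-- A path is piecewise smoothly immersed if it is constant, or piecewise `C^∞`
with nowhere-vanishing (one-sided) derivative on each piece. -/
def PiecewiseSmoothImmersed (γ : ℝ → E) : Prop :=
  (∀ t ∈ Icc (0:ℝ) 1, γ t = γ 0) ∨
  ∃ (k : ℕ) (s : Fin (k + 1) → ℝ), IsPartition s ∧
    ∀ j : Fin k, ContDiffOn ℝ (⊤ : ℕ∞) γ (Icc (s j.castSucc) (s j.succ)) ∧
      ∀ t ∈ Icc (s j.castSucc) (s j.succ),
        derivWithin γ (Icc (s j.castSucc) (s j.succ)) t ≠ 0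

/-- Concatenation of paths. -/
def pconcat {X : Type*} (a b : ℝ → X) : ℝ → X :=
  fun t => if t ≤ 1 / 2 then a (2 * t) else b (2 * t - 1)

/-- Reversal of a path. -/
def pinv {X : Type*} (a : ℝ → X) : ℝ → X := fun t => a (1 - t)

/-- Orientation-preserving piecewise smooth reparametrization. -/
def Reparam {X : Type*} (α β : ℝ → X) : Prop :=
  ∃ σ : ℝ → ℝ, PiecewiseSmooth σ ∧ σ 0 = 0 ∧ σ 1 = 1 ∧
    StrictMonoOn σ (Icc 0 1) ∧ MapsTo σ (Icc 0 1) (Icc 0 1) ∧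
    (∃ τ : ℝ → ℝ, PiecewiseSmooth τ ∧ ∀ t ∈ Icc (0:ℝ) 1, τ (σ t) = t) ∧
    ∀ t ∈ Icc (0:ℝ) 1, β t = α (σ t)

/-- One step of the retrace relation, relative to a class `C` of paths:
either a reparametrization, or cancelling a retracing `a · a⁻¹` inserted
between `α` and `β`. -/
def RetraceBase {X : Type*} (C : (ℝ → X) → Prop) (γ₁ γ₂ : ℝ → X) : Prop :=
  Reparam γ₁ γ₂ ∨
  ∃ α β a : ℝ → X, C α ∧ C β ∧ C a ∧ a 0 = α 1 ∧ β 0 = α 1 ∧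
    (∀ t ∈ Icc (0:ℝ) 1, γ₁ t = pconcat α (pconcat (pconcat a (pinv a)) β) t) ∧
    (∀ t ∈ Icc (0:ℝ) 1, γ₂ t = pconcat α β t)

/-- The retrace relation: the equivalence relation generated by `RetraceBase C`. -/
def RetraceEquiv {X : Type*} (C : (ℝ → X) → Prop) : (ℝ → X) → (ℝ → X) → Prop :=
  Relation.EqvGen (RetraceBase C)

/-- `η` is a thin homotopy (rel endpoints) from the loop `α` to the loop `β`, based at `p`. -/
def IsThinHomotopy {X : Type*} [TopologicalSpace X] (p : X) (α β : ℝ → X)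
    (η : ℝ × ℝ → X) : Prop :=
  ContinuousOn η (Icc 0 1 ×ˢ Icc 0 1) ∧
  (∀ t ∈ Icc (0:ℝ) 1, η (0, t) = α t) ∧
  (∀ t ∈ Icc (0:ℝ) 1, η (1, t) = β t) ∧
  (∀ s ∈ Icc (0:ℝ) 1, η (s, 0) = p ∧ η (s, 1) = p) ∧
  η '' (Icc 0 1 ×ˢ Icc 0 1) ⊆ α '' Icc 0 1 ∪ β '' Icc 0 1

/-- Thin equivalence within the class `C` of loops based at `p`: the equivalence
relation on `C` generated by existence of a thin homotopy. -/
def ThinEquiv {X : Type*} [TopologicalSpace X] (C : (ℝ → X) → Prop) (p : X) :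
    (ℝ → X) → (ℝ → X) → Prop :=
  Relation.EqvGen (fun α β => C α ∧ C β ∧ ∃ η, IsThinHomotopy p α β η)

variable {n : ℕ}

/-- The `i`-th coordinate derivative of a path in `ℝⁿ` (junk value where not differentiable;
for a piecewise smooth path this is the honest derivative off the partition points). -/
def pathDeriv (γ : ℝ → (Fin n → ℝ)) (i : Fin n) : ℝ → ℝ :=
  fun t => deriv (fun u => γ u i) t

/-- `chenS γ [i_p, …, i_1] t` is the iterated integral
`∫_{0 ≤ t₁ ≤ ⋯ ≤ t_p ≤ t} γ'_{i₁}(t₁) ⋯ γ'_{i_p}(t_p)`; note the reversed index list. -/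
def chenS (γ : ℝ → (Fin n → ℝ)) : List (Fin n) → ℝ → ℝ
  | [], _ => 1
  | i :: is, t => ∫ s in (0:ℝ)..t, chenS γ is s * pathDeriv γ i s

/-- `S_t(i₁,…,i_p)`: the elementary iterated integral over `{0 ≤ t₁ ≤ ⋯ ≤ t_p ≤ t}`,
with the index list in natural order `[i₁, …, i_p]`. -/
def sigPartial (γ : ℝ → (Fin n → ℝ)) (l : List (Fin n)) (t : ℝ) : ℝ :=
  chenS γ l.reverse t

/-- The elementary iterated integral `∫_γ dx_{i₁} ⋯ dx_{i_p}` for `l = [i₁, …, i_p]`. -/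
def elemIterInt (γ : ℝ → (Fin n → ℝ)) (l : List (Fin n)) : ℝ :=
  chenS γ l.reverse 1

/-!
Suppose first that the signatures agree. The lift of a path to its running signatures is a curve of
group-like functionals, that is, of characters of the shuffle algebra, satisfying the differential
equation `d x_{iw} = x_w d x_i`. On the compact union `K` of the two lifts, the word coordinates
span a dense algebra, and integrating them against `d x_i` along a curve returns differences of
word coordinates; so the integrals of all continuous functions along a curve in `K` depend only on
its endpoints. Two such curves meeting only at their endpoints would contradict this, since a
function can be prescribed on one of them and vanish on the other. Hence `K` behaves like a real
tree: geodesics for the horizontal distance are unique and vary continuously. Equality of the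
signatures means that the lifts have the same endpoints, and sliding along the geodesics in `K`
that join them projects to a thin homotopy.

Conversely, consider words of one-forms `f(x_i) dx_i`. If near the images of the two paths no two
consecutive weights are simultaneously nonzero, then the iterated integrals evolve by a local
transport, whose monodromy is unchanged by a thin homotopy. The separation hypothesis is removed
one adjacent pair at a time: the difference of the two iterated integrals is biadditive in the
weights of the pair, dominated by a product of two measures that are absolutely continuous on the
line, and concentrated on the projection of the images to the corresponding coordinate plane, which
is null.
-/

open Filter
open scoped NNReal ENNReal ContDiff

/-! ### Integration against the derivative of a Lipschitz function -/

section Lipschitz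

variable {V W : ℝ≥0} {f u : ℝ → ℝ} {a b : ℝ}

theorem lipschitzOnWith_Icc_concat {X : Type*} [PseudoMetricSpace X] {γ : ℝ → X} {c : ℝ}
    (hab : LipschitzOnWith V γ (Icc a b)) (hbc : LipschitzOnWith W γ (Icc b c)) :
    LipschitzOnWith (max V W) γ (Icc a c) := by
  refine LipschitzOnWith.of_dist_le_mul fun s hs t ht => ?_
  wlog hst : s ≤ t generalizing s t
  · rw [dist_comm, dist_comm s]
    exact this t ht s hs (le_of_not_ge hst)
  have hab' := hab.weaken (le_max_left V W)
  have hbc' := hbc.weaken (le_max_right V W)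
  rcases le_total t b with htb | hbt
  · exact hab'.dist_le_mul s ⟨hs.1, hst.trans htb⟩ t ⟨ht.1, htb⟩
  rcases le_total b s with hbs | hsb
  · exact hbc'.dist_le_mul s ⟨hbs, hs.2⟩ t ⟨hbt, ht.2⟩
  have hb : dist s t = dist s b + dist b t := by
    simp only [Real.dist_eq, abs_of_nonpos (sub_nonpos.2 hst), abs_of_nonpos (sub_nonpos.2 hsb),
      abs_of_nonpos (sub_nonpos.2 hbt)]
    ring
  rw [hb, mul_add]
  exact (dist_triangle _ (γ b) _).trans (add_le_add
    (hab'.dist_le_mul s ⟨hs.1, hsb⟩ b ⟨hs.1.trans hsb, le_rfl⟩)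
    (hbc'.dist_le_mul b ⟨le_rfl, hbt.trans ht.2⟩ t ⟨hbt, ht.2⟩))

theorem PiecewiseSmooth.exists_lipschitzOnWith {γ : ℝ → E} (hγ : PiecewiseSmooth γ) :
    ∃ V : ℝ≥0, LipschitzOnWith V γ (Icc 0 1) := by
  obtain ⟨k, s, ⟨hs0, hs1, -⟩, hsmooth⟩ := hγ
  have hinit : ∀ j : Fin (k + 1), ∃ V : ℝ≥0, LipschitzOnWith V γ (Icc 0 (s j)) := by
    intro j
    induction j using Fin.induction with
    | zero => exact ⟨0, by simp [hs0]⟩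
    | succ j ih =>
      obtain ⟨V, hV⟩ := ih
      obtain ⟨W, hW⟩ := (hsmooth j).exists_lipschitzOnWith (by simp) (convex_Icc _ _)
        isCompact_Icc
      exact ⟨_, lipschitzOnWith_Icc_concat hV hW⟩
  simpa only [hs1] using hinit (Fin.last k)

theorem intervalIntegrable_mul_deriv (hf : LipschitzWith V f) (hu : Continuous u) (a b : ℝ) :
    IntervalIntegrable (fun t => u t * deriv f t) volume a b :=
  hf.lipschitzOnWith.absolutelyContinuousOnInterval.intervalIntegrable_deriv.continuousOn_mul
    hu.continuousOn

theorem continuous_integral_mul_deriv (hf : LipschitzWith V f) (hu : Continuous u) (a : ℝ) :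
    Continuous fun t => ∫ s in a..t, u s * deriv f s :=
  continuous_primitive (intervalIntegrable_mul_deriv hf hu) a

theorem abs_integral_mul_deriv_le (hf : LipschitzWith V f) {M : ℝ}
    (hM : ∀ t ∈ uIcc a b, |u t| ≤ M) : |∫ t in a..b, u t * deriv f t| ≤ M * V * |b - a| := by
  rw [← Real.norm_eq_abs]
  refine intervalIntegral.norm_integral_le_of_norm_le_const fun t ht => ?_
  have hMt := hM t (uIoc_subset_uIcc ht)
  rw [norm_mul]
  exact mul_le_mul hMt (norm_deriv_le_of_lipschitz hf) (norm_nonneg _) ((abs_nonneg _).trans hMt)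

theorem integral_deriv_of_lipschitzWith (hf : LipschitzWith V f) (a b : ℝ) :
    ∫ t in a..b, deriv f t = f b - f a :=
  hf.lipschitzOnWith.absolutelyContinuousOnInterval.integral_deriv_eq_sub

theorem integral_comp_mul_deriv_of_lipschitzWith {g : ℝ → ℝ} (hf : LipschitzWith V f)
    (hg : Continuous g) (a b : ℝ) :
    ∫ t in a..b, g (f t) * deriv f t = ∫ x in f a..f b, g x := by
  set G : ℝ → ℝ := fun x => ∫ y in f a..x, g y with hG
  have hderiv : ∀ x, HasDerivAt G (g x) x := fun x => hg.integral_hasStrictDerivAt _ x |>.hasDerivAt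
  have hsmooth : ContDiff ℝ 1 G :=
    contDiff_one_iff_deriv.2 ⟨fun x => (hderiv x).differentiableAt, by
      simpa only [funext fun x => (hderiv x).deriv] using hg⟩
  obtain ⟨c, d, hcd⟩ : ∃ c d, MapsTo f (uIcc a b) (Icc c d) :=
    ⟨_, _, fun t ht => hf.continuous.continuousOn.image_uIcc ▸ mem_image_of_mem f ht⟩
  obtain ⟨W, hW⟩ := hsmooth.contDiffOn.exists_lipschitzOnWith one_ne_zero (convex_Icc c d)
    isCompact_Icc
  have hac : AbsolutelyContinuousOnInterval (G ∘ f) a b :=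
    (hW.comp hf.lipschitzOnWith hcd).absolutelyContinuousOnInterval
  calc ∫ t in a..b, g (f t) * deriv f t = ∫ t in a..b, deriv (G ∘ f) t := by
        refine integral_congr_ae ?_
        filter_upwards [hf.ae_differentiableAt_real] with t ht _
        exact ((hderiv (f t)).comp t ht.hasDerivAt).deriv.symm
    _ = ∫ x in f a..f b, g x := by rw [hac.integral_deriv_eq_sub]; simp [hG]

theorem integral_mul_integral {u v : ℝ → ℝ} (hu : IntervalIntegrable u volume a b)
    (hv : IntervalIntegrable v volume a b) :
    (∫ t in a..b, u t) * ∫ t in a..b, v t =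
      ∫ t in a..b, (u t * ∫ s in a..t, v s) + (∫ s in a..t, u s) * v t := by
  have hparts := (hu.absolutelyContinuousOnInterval_intervalIntegral
    left_mem_uIcc).integral_deriv_mul_eq_sub
      (hv.absolutelyContinuousOnInterval_intervalIntegral left_mem_uIcc)
  simp only [integral_same, mul_zero, sub_zero] at hparts
  rw [← hparts]
  refine integral_congr_ae ?_
  filter_upwards [hu.ae_hasDerivAt_integral, hv.ae_hasDerivAt_integral] with t hut hvt ht
  have ht' := uIoc_subset_uIcc ht
  rw [(hut ht' a left_mem_uIcc).deriv, (hvt ht' a left_mem_uIcc).deriv]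

end Lipschitz

/-! ### Group-like words and the signature lift -/

section Words

variable {ι : Type*}

/-- The shuffle product of two words, as the list of its terms. -/
def shuffle : List ι → List ι → List (List ι)
  | [], v => [v]
  | i :: w, [] => [i :: w]
  | i :: w, j :: v =>
    (shuffle w (j :: v)).map (List.cons i) ++ (shuffle (i :: w) v).map (List.cons j)

/-- A functional on words is group-like if it is a character of the shuffle algebra. -/
structure IsGroupLike (x : List ι → ℝ) : Prop where
  nil : x [] = 1
  mul : ∀ w v, x w * x v = ((shuffle w v).map x).sum

/-- `HorizontalStep V x y r` says that `y` is reached from `x` by a horizontal move of size `r` in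
the space of functionals on words, each letter having weight `V`. The second condition is a
first-order form of the differential equation `d x_{iw} = x_w d x_i` of the signature. -/
structure HorizontalStep (V : ℝ≥0) (x y : List ι → ℝ) (r : ℝ) : Prop where
  abs_sub_le : ∀ w, |y w - x w| ≤ V ^ w.length * r
  abs_remainder_le : ∀ i w,
    |y (i :: w) - x (i :: w) - x w * (y [i] - x [i])| ≤ V ^ (w.length + 1) * r ^ 2

namespace HorizontalStep

variable {V : ℝ≥0} {x y z : List ι → ℝ} {r q : ℝ}

theorem mono (h : HorizontalStep V x y r) (hr : 0 ≤ r) (hrq : r ≤ q) : HorizontalStep V x y q where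
  abs_sub_le w := (h.abs_sub_le w).trans (by gcongr)
  abs_remainder_le i w := (h.abs_remainder_le i w).trans (by gcongr)

theorem trans (hxy : HorizontalStep V x y r) (hyz : HorizontalStep V y z q) (hr : 0 ≤ r)
    (hq : 0 ≤ q) : HorizontalStep V x z (r + q) where
  abs_sub_le w :=
    calc |z w - x w| ≤ |z w - y w| + |y w - x w| := _root_.abs_sub_le _ _ _
      _ ≤ V ^ w.length * q + V ^ w.length * r := add_le_add (hyz.abs_sub_le w) (hxy.abs_sub_le w)
      _ = V ^ w.length * (r + q) := by ring
  abs_remainder_le i w := by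
    have hcross : |(y w - x w) * (z [i] - y [i])| ≤ V ^ w.length * r * (V * q) := by
      rw [abs_mul]
      exact mul_le_mul (hxy.abs_sub_le w) (by simpa using hyz.abs_sub_le [i]) (abs_nonneg _)
        (by positivity)
    calc |z (i :: w) - x (i :: w) - x w * (z [i] - x [i])|
        = |(y (i :: w) - x (i :: w) - x w * (y [i] - x [i])) +
            (z (i :: w) - y (i :: w) - y w * (z [i] - y [i])) +
            (y w - x w) * (z [i] - y [i])| := by congr 1; ring
      _ ≤ V ^ (w.length + 1) * r ^ 2 + V ^ (w.length + 1) * q ^ 2 + V ^ w.length * r * (V * q) :=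
          (abs_add_three _ _ _).trans (add_le_add_three (hxy.abs_remainder_le i w)
            (hyz.abs_remainder_le i w) hcross)
      _ = V ^ (w.length + 1) * (r ^ 2 + q ^ 2 + r * q) := by ring
      _ ≤ V ^ (w.length + 1) * (r + q) ^ 2 := by
          gcongr
          nlinarith [mul_nonneg hr hq]

end HorizontalStep

end Words

section SignatureLift

variable {V : ℝ≥0} {γ : ℝ → Fin n → ℝ}

theorem lipschitzWith_coord (hγ : LipschitzWith V γ) (i : Fin n) :
    LipschitzWith V fun t => γ t i :=
  one_mul V ▸ (LipschitzWith.eval i).comp hγ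

/-- The signature lift `t ↦ (w ↦ S_t(w))` of a path, which replaces the path by a curve of
group-like functionals. -/
def signatureLift (γ : ℝ → Fin n → ℝ) (t : ℝ) (w : List (Fin n)) : ℝ :=
  chenS γ w t

theorem intervalIntegrable_mul_pathDeriv (hγ : LipschitzWith V γ) (i : Fin n) {u : ℝ → ℝ}
    (hu : Continuous u) (a b : ℝ) :
    IntervalIntegrable (fun t => u t * pathDeriv γ i t) volume a b :=
  intervalIntegrable_mul_deriv (lipschitzWith_coord hγ i) hu a b

theorem continuous_chenS (hγ : LipschitzWith V γ) (w : List (Fin n)) : Continuous (chenS γ w) := by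
  induction w with
  | nil => exact continuous_const
  | cons i w ih => exact continuous_integral_mul_deriv (lipschitzWith_coord hγ i) ih 0

theorem continuous_signatureLift (hγ : LipschitzWith V γ) : Continuous (signatureLift γ) :=
  continuous_pi (continuous_chenS hγ)

theorem signatureLift_zero_eq (γ δ : ℝ → Fin n → ℝ) : signatureLift γ 0 = signatureLift δ 0 := by
  funext w
  cases w <;> simp [signatureLift, chenS]

theorem signatureLift_cons_sub (hγ : LipschitzWith V γ) (i : Fin n) (w : List (Fin n)) (s t : ℝ) :
    signatureLift γ t (i :: w) - signatureLift γ s (i :: w) =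
      ∫ u in s..t, chenS γ w u * pathDeriv γ i u :=
  integral_interval_sub_left (intervalIntegrable_mul_pathDeriv hγ i (continuous_chenS hγ w) 0 t)
    (intervalIntegrable_mul_pathDeriv hγ i (continuous_chenS hγ w) 0 s)

theorem signatureLift_singleton (hγ : LipschitzWith V γ) (i : Fin n) (t : ℝ) :
    signatureLift γ t [i] = γ t i - γ 0 i := by
  simpa [signatureLift, chenS, pathDeriv] using
    integral_deriv_of_lipschitzWith (lipschitzWith_coord hγ i) 0 t

theorem integral_sum_chenS_mul_pathDeriv (hγ : LipschitzWith V γ) (i : Fin n)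
    (l : List (List (Fin n))) (t : ℝ) :
    ∫ s in 0..t, (l.map fun w => chenS γ w s).sum * pathDeriv γ i s =
      (l.map fun w => chenS γ (i :: w) t).sum := by
  induction l with
  | nil => simp
  | cons w l ih =>
    have hl : Continuous fun s => (l.map fun w => chenS γ w s).sum :=
      continuous_list_sum _ fun w _ => continuous_chenS hγ w
    simp only [List.map_cons, List.sum_cons, add_mul]
    rw [integral_add (intervalIntegrable_mul_pathDeriv hγ i (continuous_chenS hγ w) 0 t)
      (intervalIntegrable_mul_pathDeriv hγ i hl 0 t), ih]
    rfl

theorem isGroupLike_signatureLift (hγ : LipschitzWith V γ) (t : ℝ) :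
    IsGroupLike (signatureLift γ t) where
  nil := rfl
  mul w v := by
    change chenS γ w t * chenS γ v t = ((shuffle w v).map fun u => chenS γ u t).sum
    induction w, v using shuffle.induct generalizing t with
    | case1 v => simp [shuffle, chenS]
    | case2 i w => simp [shuffle, chenS]
    | case3 i w j v ihw ihv =>
      simp only [shuffle, List.map_append, List.map_map, List.sum_append, Function.comp_def]
      rw [← integral_sum_chenS_mul_pathDeriv hγ i, ← integral_sum_chenS_mul_pathDeriv hγ j]
      simp only [← ihw, ← ihv]
      rw [← intervalIntegral.integral_add]
      · refine (integral_mul_integral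
          (intervalIntegrable_mul_pathDeriv hγ i (continuous_chenS hγ w) 0 t)
          (intervalIntegrable_mul_pathDeriv hγ j (continuous_chenS hγ v) 0 t)).trans ?_
        refine integral_congr fun s _ => ?_
        simp only [chenS]
        ring
      · exact intervalIntegrable_mul_pathDeriv hγ i
          ((continuous_chenS hγ w).mul (continuous_chenS hγ (j :: v))) 0 t
      · exact intervalIntegrable_mul_pathDeriv hγ j
          ((continuous_chenS hγ (i :: w)).mul (continuous_chenS hγ v)) 0 t

theorem abs_chenS_le (hγ : LipschitzWith V γ) (w : List (Fin n)) {t : ℝ} (ht : t ∈ Icc (0 : ℝ) 1) :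
    |chenS γ w t| ≤ V ^ w.length := by
  induction w generalizing t with
  | nil => simp [chenS]
  | cons i w ih =>
    calc |chenS γ (i :: w) t| ≤ V ^ w.length * V * |t - 0| :=
          abs_integral_mul_deriv_le (lipschitzWith_coord hγ i) fun s hs =>
            ih (uIcc_subset_Icc (by simp) ht hs)
      _ ≤ V ^ w.length * V * 1 := by
          gcongr
          simpa [abs_of_nonneg ht.1] using ht.2
      _ = V ^ (i :: w).length := by simp [pow_succ]

theorem abs_signatureLift_sub_le (hγ : LipschitzWith V γ) {s t : ℝ} (hs : s ∈ Icc (0 : ℝ) 1)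
    (ht : t ∈ Icc (0 : ℝ) 1) (w : List (Fin n)) :
    |signatureLift γ t w - signatureLift γ s w| ≤ V ^ w.length * |s - t| := by
  cases w with
  | nil => simp [signatureLift, chenS]
  | cons i w =>
    rw [signatureLift_cons_sub hγ, abs_sub_comm s t, List.length_cons, pow_succ]
    exact abs_integral_mul_deriv_le (lipschitzWith_coord hγ i) fun u hu =>
      abs_chenS_le hγ w (uIcc_subset_Icc hs ht hu)

theorem horizontalStep_signatureLift (hγ : LipschitzWith V γ) {s t : ℝ} (hs : s ∈ Icc (0 : ℝ) 1)
    (ht : t ∈ Icc (0 : ℝ) 1) :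
    HorizontalStep V (signatureLift γ s) (signatureLift γ t) |s - t| where
  abs_sub_le := abs_signatureLift_sub_le hγ hs ht
  abs_remainder_le i w := by
    have hremainder : signatureLift γ t (i :: w) - signatureLift γ s (i :: w) -
        signatureLift γ s w * (signatureLift γ t [i] - signatureLift γ s [i]) =
          ∫ u in s..t, (chenS γ w u - chenS γ w s) * pathDeriv γ i u := by
      simp only [signatureLift_cons_sub hγ, sub_mul]
      rw [intervalIntegral.integral_sub
        (intervalIntegrable_mul_pathDeriv hγ i (continuous_chenS hγ w) s t)
        (intervalIntegrable_mul_pathDeriv hγ i continuous_const s t)]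
      simp [chenS, signatureLift]
    have hbound : ∀ u ∈ uIcc s t, |chenS γ w u - chenS γ w s| ≤ V ^ w.length * |s - t| :=
      fun u hu => (abs_signatureLift_sub_le hγ hs (uIcc_subset_Icc hs ht hu) w).trans (by
        rw [abs_sub_comm s u, abs_sub_comm s t]
        exact mul_le_mul_of_nonneg_left (abs_sub_left_of_mem_uIcc hu) (by positivity))
    rw [hremainder]
    refine (abs_integral_mul_deriv_le (lipschitzWith_coord hγ i) hbound).trans_eq ?_
    rw [abs_sub_comm t s, pow_succ]
    ring

end SignatureLift

/-! ### Horizontal curves -/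

section Horizontal

variable {ι : Type*} {K : Set (List ι → ℝ)} {V : ℝ≥0} {c d : ℝ → List ι → ℝ} {a b : ℝ}

/-- A horizontal curve in `K`, parametrized by `ℝ` with speed at most one in each letter (in units
of `V`). -/
structure IsHorizontal (K : Set (List ι → ℝ)) (V : ℝ≥0) (c : ℝ → List ι → ℝ) : Prop where
  mem : ∀ t, c t ∈ K
  step : ∀ s t, HorizontalStep V (c s) (c t) |s - t|

namespace IsHorizontal

theorem comp (hc : IsHorizontal K V c) {φ : ℝ → ℝ} (hφ : LipschitzWith 1 φ) :
    IsHorizontal K V (c ∘ φ) where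
  mem t := hc.mem (φ t)
  step s t := (hc.step (φ s) (φ t)).mono (abs_nonneg _) (by
    simpa only [NNReal.coe_one, one_mul, Real.dist_eq] using hφ.dist_le_mul s t)

theorem concat (hc : IsHorizontal K V c) (hd : IsHorizontal K V d) {L : ℝ} (hL : c L = d 0) :
    IsHorizontal K V fun t => if t ≤ L then c t else d (t - L) where
  mem t := by
    split_ifs
    exacts [hc.mem t, hd.mem (t - L)]
  step s t := by
    have hjoin : ∀ u v, u ≤ L → L ≤ v → |u - v| = |u - L| + |0 - (v - L)| := fun u v hu hv => by
      rw [abs_of_nonpos (by linarith), abs_of_nonpos (by linarith), abs_of_nonpos (by linarith)]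
      ring
    split_ifs with hs ht ht
    · exact hc.step s t
    · rw [hjoin s t hs (le_of_not_ge ht)]
      exact (hL ▸ hc.step s L).trans (hd.step 0 (t - L)) (abs_nonneg _) (abs_nonneg _)
    · rw [abs_sub_comm, hjoin t s ht (le_of_not_ge hs), add_comm, abs_sub_comm 0, abs_sub_comm t]
      exact (hd.step (s - L) 0).trans (hL ▸ hc.step L t) (abs_nonneg _) (abs_nonneg _)
    · simpa only [sub_sub_sub_cancel_right] using hd.step (s - L) (t - L)

theorem lipschitzWith_apply (hc : IsHorizontal K V c) (w : List ι) :
    LipschitzWith (V ^ w.length) fun t => c t w :=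
  LipschitzWith.of_dist_le_mul fun s t => by
    rw [dist_comm]
    simpa only [Real.dist_eq, NNReal.coe_pow] using (hc.step s t).abs_sub_le w

theorem lipschitzWith_letter (hc : IsHorizontal K V c) (i : ι) :
    LipschitzWith V fun t => c t [i] := by
  simpa using hc.lipschitzWith_apply [i]

theorem continuous (hc : IsHorizontal K V c) : Continuous c :=
  continuous_pi fun w => (hc.lipschitzWith_apply w).continuous

theorem hasDerivAt_cons (hc : IsHorizontal K V c) (i : ι) (w : List ι) {t m : ℝ}
    (hm : HasDerivAt (fun u => c u [i]) m t) :
    HasDerivAt (fun u => c u (i :: w)) (c t w * m) t := by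
  have hbigO : (fun u => c u (i :: w) - c t (i :: w) - c t w * (c u [i] - c t [i])) =O[𝓝 t]
      fun u => ‖u - t‖ ^ 2 :=
    Asymptotics.IsBigO.of_bound (V ^ (w.length + 1)) (Eventually.of_forall fun u => by
      simpa [abs_sub_comm] using (hc.step t u).abs_remainder_le i w)
  have hremainder := (hbigO.hasFDerivAt one_lt_two).hasDerivAt
  have hsum :=
    (hremainder.add ((hm.sub_const (c t [i])).const_mul (c t w))).add_const (c t (i :: w))
  refine (hsum.congr_of_eventuallyEq (Eventually.of_forall fun u => ?_)).congr_deriv ?_ <;> simp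

theorem cons_sub_eq_integral (hc : IsHorizontal K V c) (i : ι) (w : List ι) (a b : ℝ) :
    c b (i :: w) - c a (i :: w) = ∫ t in a..b, c t w * deriv (fun u => c u [i]) t := by
  rw [← integral_deriv_of_lipschitzWith (hc.lipschitzWith_apply (i :: w)) a b]
  refine integral_congr_ae ?_
  filter_upwards [(hc.lipschitzWith_letter i).ae_differentiableAt_real] with t ht _
  exact (hc.hasDerivAt_cons i w ht.hasDerivAt).deriv

end IsHorizontal

theorem isClosed_setOf_horizontalStep (s t r : ℝ) :
    IsClosed {c : ℝ → List ι → ℝ | HorizontalStep V (c s) (c t) r} := by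
  have hinter : {c : ℝ → List ι → ℝ | HorizontalStep V (c s) (c t) r} =
      (⋂ w, {c | |c t w - c s w| ≤ V ^ w.length * r}) ∩
        ⋂ i, ⋂ w, {c | |c t (i :: w) - c s (i :: w) - c s w * (c t [i] - c s [i])| ≤
          V ^ (w.length + 1) * r ^ 2} := by
    ext c
    simp only [mem_inter_iff, mem_iInter]
    exact ⟨fun h => ⟨h.abs_sub_le, h.abs_remainder_le⟩, fun h => ⟨h.1, h.2⟩⟩
  rw [hinter]
  refine (isClosed_iInter fun w => ?_).inter (isClosed_iInter fun i => isClosed_iInter fun w => ?_)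
  all_goals exact isClosed_le (by fun_prop) continuous_const

theorem compactSpace_isHorizontal (hK : IsCompact K) : CompactSpace {c // IsHorizontal K V c} := by
  have hinter : {c | IsHorizontal K V c} =
      univ.pi (fun _ : ℝ => K) ∩ ⋂ s, ⋂ t, {c | HorizontalStep V (c s) (c t) |s - t|} := by
    ext c
    simp only [mem_inter_iff, Set.mem_univ_pi, mem_iInter]
    exact ⟨fun h : IsHorizontal K V c => ⟨h.mem, h.step⟩, fun h => ⟨h.1, h.2⟩⟩
  refine (isCompact_iff_compactSpace (s := {c | IsHorizontal K V c})).1 ?_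
  rw [hinter]
  exact (isCompact_univ_pi fun _ => hK).inter_right
    (isClosed_iInter fun s => isClosed_iInter fun t => isClosed_setOf_horizontalStep s t _)

theorem continuous_eval_isHorizontal :
    Continuous fun q : ℝ × {c // IsHorizontal K V c} => q.2.1 q.1 :=
  continuous_pi fun w => (continuous_prod_of_continuous_lipschitzWith
    (fun q : ℝ × {c // IsHorizontal K V c} => q.2.1 q.1 w) (V ^ w.length)
    (fun t => continuous_apply_apply t w |>.comp continuous_subtype_val)
    fun c => c.2.lipschitzWith_apply w)

theorem continuous_of_forall_mem_closed_eq {X Y C : Type*} [TopologicalSpace X]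
    [TopologicalSpace Y] [TopologicalSpace C] [CompactSpace C] {R : Set (X × C)} (hR : IsClosed R)
    (hsurj : ∀ x, ∃ c, (x, c) ∈ R) {e : X × C → Y} (he : Continuous e) {f : X → Y}
    (hef : ∀ q ∈ R, e q = f q.1) : Continuous f := by
  refine continuous_iff_isClosed.2 fun F hF => ?_
  have himage : f ⁻¹' F = Prod.fst '' (R ∩ e ⁻¹' F) := by
    ext x
    constructor
    · intro hx
      obtain ⟨c, hc⟩ := hsurj x
      exact ⟨(x, c), ⟨hc, mem_preimage.2 (hef _ hc ▸ hx)⟩, rfl⟩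
    · rintro ⟨q, ⟨hq, hqF⟩, rfl⟩
      exact mem_preimage.2 (hef q hq ▸ hqF)
  rw [himage]
  exact isClosedMap_fst_of_compactSpace _ (hR.inter (hF.preimage he))

/-! ### The horizontal distance -/

variable {x y z : List ι → ℝ} {L M : ℝ}

/-- `x` and `y` are joined by a horizontal curve in `K` of length at most `L`. -/
def HorizontallyJoined (K : Set (List ι → ℝ)) (V : ℝ≥0) (x y : List ι → ℝ) (L : ℝ) : Prop :=
  0 ≤ L ∧ ∃ c, IsHorizontal K V c ∧ c 0 = x ∧ c L = y

/-- The Carnot–Carathéodory distance: the least length of a horizontal curve in `K` from `x` to `y`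
(junk value `0` if there is none). -/
def horizontalDist (K : Set (List ι → ℝ)) (V : ℝ≥0) (x y : List ι → ℝ) : ℝ :=
  sInf {L | HorizontallyJoined K V x y L}

theorem IsHorizontal.horizontallyJoined (hc : IsHorizontal K V c) (hab : a ≤ b) :
    HorizontallyJoined K V (c a) (c b) (b - a) :=
  ⟨sub_nonneg.2 hab, _, hc.comp (isometry_add_left a).lipschitz, by simp, by simp⟩

namespace HorizontallyJoined

theorem symm (h : HorizontallyJoined K V x y L) : HorizontallyJoined K V y x L := by
  obtain ⟨hL, c, hc, hx, hy⟩ := h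
  exact ⟨hL, _, hc.comp (IsometryEquiv.subLeft L).isometry.lipschitz, by simpa using hy,
    by simpa using hx⟩

theorem trans (hxy : HorizontallyJoined K V x y L) (hyz : HorizontallyJoined K V y z M) :
    HorizontallyJoined K V x z (L + M) := by
  obtain ⟨hL, c, hc, hx, hy⟩ := hxy
  obtain ⟨hM, d, hd, hy', hz⟩ := hyz
  refine ⟨add_nonneg hL hM, _, hc.concat hd (hy.trans hy'.symm), by simp [hL, hx], ?_⟩
  rcases hM.eq_or_lt with rfl | hM
  · simp [hy, ← hz, hy']
  · simp [hM, hz]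

theorem horizontalDist_le (h : HorizontallyJoined K V x y L) : horizontalDist K V x y ≤ L :=
  csInf_le ⟨0, fun _ hM => hM.1⟩ h

theorem isClosed_setOf (hK : IsCompact K) (x y : List ι → ℝ) :
    IsClosed {L | HorizontallyJoined K V x y L} := by
  have := compactSpace_isHorizontal (V := V) hK
  have himage : {L | HorizontallyJoined K V x y L} = Ici 0 ∩
      Prod.fst '' {q : ℝ × {c // IsHorizontal K V c} | q.2.1 0 = x ∧ q.2.1 q.1 = y} := by
    ext L
    constructor
    · rintro ⟨hL, c, hc, hx, hy⟩
      exact ⟨hL, (L, ⟨c, hc⟩), ⟨hx, hy⟩, rfl⟩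
    · rintro ⟨hL, q, ⟨hx, hy⟩, rfl⟩
      exact ⟨hL, q.2.1, q.2.2, hx, hy⟩
  rw [himage]
  refine isClosed_Ici.inter (isClosedMap_fst_of_compactSpace _ (IsClosed.inter ?_ ?_))
  · exact isClosed_eq ((continuous_apply 0).comp (continuous_subtype_val.comp continuous_snd))
      continuous_const
  · exact isClosed_eq continuous_eval_isHorizontal continuous_const

protected theorem horizontalDist (hK : IsCompact K) (h : HorizontallyJoined K V x y L) :
    HorizontallyJoined K V x y (horizontalDist K V x y) :=
  (isClosed_setOf hK x y).csInf_mem ⟨L, h⟩ ⟨0, fun _ hM => hM.1⟩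

end HorizontallyJoined

end Horizontal

/-! ### Horizontal geodesics are unique -/

section StoneWeierstrass

variable {ι : Type*} {K : Set (List ι → ℝ)}

/-- The word `w`, viewed as a coordinate function on a set `K` of functionals on words. -/
def wordCoord (K : Set (List ι → ℝ)) (w : List ι) : C(K, ℝ) where
  toFun x := x.1 w
  continuous_toFun := (continuous_apply w).comp continuous_subtype_val

theorem wordCoord_mul (hgl : ∀ x ∈ K, IsGroupLike x) (w v : List ι) :
    wordCoord K w * wordCoord K v = ((shuffle w v).map (wordCoord K)).sum := by
  ext x
  have heval := map_list_sum (ContinuousMap.evalCLM ℝ x) ((shuffle w v).map (wordCoord K))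
  rw [List.map_map] at heval
  exact ((hgl x x.2).mul w v).trans heval.symm

theorem dense_span_range_wordCoord [CompactSpace K] (hgl : ∀ x ∈ K, IsGroupLike x) :
    Dense (Submodule.span ℝ (range (wordCoord K)) : Set C(K, ℝ)) := by
  set p := Submodule.span ℝ (range (wordCoord K)) with hp
  have hone : (1 : C(K, ℝ)) ∈ p :=
    Submodule.subset_span ⟨[], ContinuousMap.ext fun x => (hgl x x.2).nil⟩
  have hmul : p * p ≤ p := by
    rw [hp, Submodule.span_mul_span, Submodule.span_le]
    rintro _ ⟨_, ⟨w, rfl⟩, _, ⟨v, rfl⟩, rfl⟩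
    simp only [wordCoord_mul hgl]
    refine list_sum_mem fun F hF => ?_
    obtain ⟨u, -, rfl⟩ := List.mem_map.1 hF
    exact Submodule.subset_span (mem_range_self u)
  set A := p.toSubalgebra hone fun F G hF hG => hmul (Submodule.mul_mem_mul hF hG)
  have hsep : A.SeparatesPoints := fun x y hxy => by
    obtain ⟨w, hw⟩ := Function.ne_iff.1 (Subtype.coe_injective.ne hxy)
    exact ⟨wordCoord K w, ⟨_, Submodule.subset_span (mem_range_self w), rfl⟩, hw⟩
  have htop := ContinuousMap.subalgebra_topologicalClosure_eq_top_of_separatesPoints A hsep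
  exact dense_iff_closure_eq.2 (congrArg SetLike.coe htop)

end StoneWeierstrass

theorem exists_continuousMap_comp_eq_of_factorsThrough {S X : Type*} [TopologicalSpace S]
    [CompactSpace S] [TopologicalSpace X] [T2Space X] [NormalSpace X] (Φ : C(S, X)) (G : C(S, ℝ))
    (hG : Function.FactorsThrough G Φ) : ∃ F : C(X, ℝ), F.comp Φ = G := by
  set Ψ : C(S, range Φ) := ⟨rangeFactorization Φ, Φ.continuous.subtype_mk _⟩
  have hΨ : IsQuotientMap Ψ := .of_surjective_continuous rangeFactorization_surjective Ψ.continuous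
  have hGΨ : Function.FactorsThrough G Ψ := fun s t hst => hG (congrArg Subtype.val hst)
  obtain ⟨F, hF⟩ := ContinuousMap.exists_restrict_eq
    (isCompact_range Φ.continuous).isClosed (hΨ.lift G hGΨ)
  exact ⟨F, ContinuousMap.ext fun s => (DFunLike.congr_fun hF (Ψ s)).trans
    (DFunLike.congr_fun (hΨ.lift_comp G hGΨ) s)⟩

section Geodesics

variable {ι : Type*} {K : Set (List ι → ℝ)} {V : ℝ≥0} {c d : ℝ → List ι → ℝ} {a b L t : ℝ}

namespace IsHorizontal

/-- The integral `F ↦ ∫_a^b F(c) dc_i` along a horizontal curve. -/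
def lineIntegral [CompactSpace K] (hc : IsHorizontal K V c) (i : ι) (a b : ℝ) :
    C(K, ℝ) →L[ℝ] ℝ :=
  LinearMap.mkContinuous
    { toFun F := ∫ t in a..b, F ⟨c t, hc.mem t⟩ * deriv (fun u => c u [i]) t
      map_add' F G := by
        have hcont := hc.continuous
        simp only [ContinuousMap.add_apply, add_mul]
        exact intervalIntegral.integral_add
          (intervalIntegrable_mul_deriv (hc.lipschitzWith_letter i) (by fun_prop) a b)
          (intervalIntegrable_mul_deriv (hc.lipschitzWith_letter i) (by fun_prop) a b)
      map_smul' r F := by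
        simp only [ContinuousMap.smul_apply, smul_eq_mul, mul_assoc, RingHom.id_apply]
        exact intervalIntegral.integral_const_mul _ _ }
    (V * |b - a|) fun F =>
      (abs_integral_mul_deriv_le (hc.lipschitzWith_letter i) fun _ _ =>
        F.norm_coe_le_norm _).trans_eq (by ring)

theorem lineIntegral_wordCoord [CompactSpace K] (hc : IsHorizontal K V c) (i : ι) (a b : ℝ)
    (w : List ι) : hc.lineIntegral i a b (wordCoord K w) = c b (i :: w) - c a (i :: w) :=
  (hc.cons_sub_eq_integral i w a b).symm

theorem lineIntegral_eq_of_endpoints_eq [CompactSpace K] (hgl : ∀ x ∈ K, IsGroupLike x)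
    (hc : IsHorizontal K V c) (hd : IsHorizontal K V d) (ha : c a = d a) (hb : c b = d b) (i : ι) :
    hc.lineIntegral i a b = hd.lineIntegral i a b := by
  refine ContinuousLinearMap.ext_on (dense_span_range_wordCoord hgl) ?_
  rintro _ ⟨w, rfl⟩
  rw [lineIntegral_wordCoord, lineIntegral_wordCoord, ha, hb]

end IsHorizontal

/-- The curves `c` and `d` over `[a, b]` form a bigon: they share their endpoints, and `c` is
injective and meets `d` nowhere else. -/
structure IsBigon (c d : ℝ → List ι → ℝ) (a b : ℝ) : Prop where
  lt : a < b
  left : c a = d a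
  right : c b = d b
  injOn : InjOn c (Icc a b)
  ne : ∀ s ∈ Ioo a b, ∀ t ∈ Icc a b, c s ≠ d t

namespace IsBigon

theorem exists_continuousMap [CompactSpace K] (h : IsBigon c d a b) (hc : IsHorizontal K V c)
    (hd : IsHorizontal K V d) {g : ℝ → ℝ} (hg : Continuous g)
    (hsupp : Function.support g ⊆ Ioo a b) :
    ∃ F : C(K, ℝ), ∀ t ∈ Icc a b, F ⟨c t, hc.mem t⟩ = g t ∧ F ⟨d t, hd.mem t⟩ = 0 := by
  have hg0 : ∀ s ∈ Icc a b, ∀ t ∈ Icc a b, c s = d t → g s = 0 := fun s _ t ht hst => by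
    by_contra hs0
    exact h.ne s (hsupp hs0) t ht hst
  have hccont := hc.continuous
  have hdcont := hd.continuous
  obtain ⟨F, hF⟩ := exists_continuousMap_comp_eq_of_factorsThrough
    (S := Icc a b ⊕ Icc a b) (X := K)
    ⟨Sum.elim (fun t => ⟨c t, hc.mem t⟩) fun t => ⟨d t, hd.mem t⟩, by fun_prop⟩
    ⟨Sum.elim (fun t => g t) fun _ => 0, by fun_prop⟩ (by
      rintro (s | s) (t | t) hst
      · exact congrArg g (h.injOn s.2 t.2 (congrArg Subtype.val hst))
      · exact hg0 s s.2 t t.2 (congrArg Subtype.val hst)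
      · exact (hg0 t t.2 s s.2 (congrArg Subtype.val hst).symm).symm
      · rfl)
  exact ⟨F, fun t ht =>
    ⟨DFunLike.congr_fun hF (.inl ⟨t, ht⟩), DFunLike.congr_fun hF (.inr ⟨t, ht⟩)⟩⟩

theorem integral_mul_deriv_eq_zero (h : IsBigon c d a b) (hK : IsCompact K)
    (hgl : ∀ x ∈ K, IsGroupLike x) (hc : IsHorizontal K V c) (hd : IsHorizontal K V d) (i : ι)
    {g : ℝ → ℝ} (hg : Continuous g) (hsupp : Function.support g ⊆ Ioo a b) :
    ∫ t in a..b, g t * deriv (fun u => c u [i]) t = 0 := by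
  have := isCompact_iff_compactSpace.1 hK
  obtain ⟨F, hF⟩ := h.exists_continuousMap hc hd hg hsupp
  rw [← uIcc_of_le h.lt.le] at hF
  calc ∫ t in a..b, g t * deriv (fun u => c u [i]) t = hc.lineIntegral i a b F :=
        integral_congr fun t ht => by rw [← (hF t ht).1]
    _ = hd.lineIntegral i a b F := by
        rw [hc.lineIntegral_eq_of_endpoints_eq hgl hd h.left h.right]
    _ = ∫ _ in a..b, (0 : ℝ) := integral_congr fun t ht => by rw [(hF t ht).2, zero_mul]
    _ = 0 := intervalIntegral.integral_zero

theorem ae_deriv_letter_eq_zero (h : IsBigon c d a b) (hK : IsCompact K)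
    (hgl : ∀ x ∈ K, IsGroupLike x) (hc : IsHorizontal K V c) (hd : IsHorizontal K V d) (i : ι) :
    ∀ᵐ t, t ∈ Ioo a b → deriv (fun u => c u [i]) t = 0 := by
  have hint : IntervalIntegrable (deriv fun u => c u [i]) volume a b := by
    simpa using intervalIntegrable_mul_deriv (hc.lipschitzWith_letter i) continuous_one a b
  refine isOpen_Ioo.ae_eq_zero_of_integral_contDiff_smul_eq_zero
    (hint.1.mono_set Ioo_subset_Ioc_self).locallyIntegrableOn fun g hg _ hgsupp => ?_
  have hsupp := (subset_tsupport g).trans hgsupp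
  rw [← h.integral_mul_deriv_eq_zero hK hgl hc hd i hg.continuous hsupp,
    integral_eq_integral_of_support_subset
      ((Function.support_mul_subset_left _ _).trans (hsupp.trans Ioo_subset_Ioc_self))]
  rfl

end IsBigon

/-- A continuous function on `c ∪ d` may be prescribed on `c` and zero on `d`, so equality of the
line integrals forces `c` to have vanishing velocity. -/
theorem not_isBigon (hK : IsCompact K) (hgl : ∀ x ∈ K, IsGroupLike x) (hc : IsHorizontal K V c)
    (hd : IsHorizontal K V d) : ¬ IsBigon c d a b := fun h => by
  refine h.lt.ne (h.injOn (left_mem_Icc.2 h.lt.le) (right_mem_Icc.2 h.lt.le) (funext fun w => ?_))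
  cases w with
  | nil => rw [(hgl _ (hc.mem a)).nil, (hgl _ (hc.mem b)).nil]
  | cons i w =>
    refine (sub_eq_zero.1 ((hc.cons_sub_eq_integral i w a b).trans ?_)).symm
    refine integral_zero_ae ?_
    filter_upwards [h.ae_deriv_letter_eq_zero hK hgl hc hd i,
      compl_mem_ae_iff.2 (measure_singleton b)] with t ht htb htab
    rw [uIoc_of_le h.lt.le] at htab
    rw [ht ⟨htab.1, htab.2.lt_of_ne htb⟩, mul_zero]

namespace IsHorizontal

theorem horizontalDist_eq_of_mem_Icc (hK : IsCompact K) (hc : IsHorizontal K V c)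
    (hL : horizontalDist K V (c 0) (c L) = L) (ht : t ∈ Icc 0 L) :
    horizontalDist K V (c 0) (c t) = t := by
  have h0t : HorizontallyJoined K V (c 0) (c t) t := ⟨ht.1, c, hc, rfl, rfl⟩
  have htL := (h0t.horizontalDist hK).trans (hc.horizontallyJoined ht.2)
  linarith [htL.horizontalDist_le, h0t.horizontalDist_le]

theorem eqOn_of_horizontalDist_eq (hK : IsCompact K) (hgl : ∀ x ∈ K, IsGroupLike x)
    (hc : IsHorizontal K V c) (hd : IsHorizontal K V d) (h0 : c 0 = d 0) (h1 : c L = d L)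
    (hL : horizontalDist K V (c 0) (c L) = L) : EqOn c d (Icc 0 L) := by
  intro t ht
  by_contra hne
  have hclosed : IsClosed {t | c t = d t} := isClosed_eq hc.continuous hd.continuous
  obtain ⟨a, ⟨ha, hca⟩, hamax⟩ := (isCompact_Icc.inter_right hclosed).exists_isGreatest
    (⟨0, ⟨le_rfl, ht.1⟩, h0⟩ : (Icc 0 t ∩ {t | c t = d t}).Nonempty)
  obtain ⟨b, ⟨hb, hcb⟩, hbmin⟩ := (isCompact_Icc.inter_right hclosed).exists_isLeast
    (⟨L, ⟨ht.2, le_rfl⟩, h1⟩ : (Icc t L ∩ {t | c t = d t}).Nonempty)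
  have hat : a < t := ha.2.lt_of_ne fun h => hne (h ▸ hca)
  have htb : t < b := hb.1.lt_of_ne fun h => hne (h ▸ hcb)
  have hdistc : ∀ s ∈ Icc a b, horizontalDist K V (c 0) (c s) = s := fun s hs =>
    hc.horizontalDist_eq_of_mem_Icc hK hL (Icc_subset_Icc ha.1 hb.2 hs)
  have hdistd : ∀ s ∈ Icc a b, horizontalDist K V (c 0) (d s) = s := fun s hs =>
    h0 ▸ hd.horizontalDist_eq_of_mem_Icc hK (h0 ▸ h1 ▸ hL) (Icc_subset_Icc ha.1 hb.2 hs)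
  refine not_isBigon hK hgl hc hd ⟨hat.trans htb, hca, hcb, fun s hs u hu hsu => ?_,
    fun s hs u hu hsu => ?_⟩
  · rw [← hdistc s hs, hsu, hdistc u hu]
  · obtain rfl : s = u := by rw [← hdistc s (Ioo_subset_Icc_self hs), hsu, hdistd u hu]
    rcases le_total s t with hst | hts
    · exact hs.1.not_ge (hamax ⟨⟨ha.1.trans hu.1, hst⟩, hsu⟩)
    · exact hs.2.not_ge (hbmin ⟨⟨hts, hu.2.trans hb.2⟩, hsu⟩)

end IsHorizontal

end Geodesics

/-! ### Geodesic homotopies and thin homotopies -/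

section GeodesicHomotopy

variable {ι : Type*} {K : Set (List ι → ℝ)} {V : ℝ≥0} {c d : ℝ → List ι → ℝ}

namespace IsHorizontal

theorem horizontallyJoined_abs_sub (hc : IsHorizontal K V c) (s t : ℝ) :
    HorizontallyJoined K V (c s) (c t) |s - t| := by
  rcases le_total s t with hst | hts
  · rw [abs_sub_comm, abs_of_nonneg (sub_nonneg.2 hst)]
    exact hc.horizontallyJoined hst
  · rw [abs_of_nonneg (sub_nonneg.2 hts)]
    exact (hc.horizontallyJoined hts).symm

theorem horizontallyJoined_horizontalDist (hK : IsCompact K) (hc : IsHorizontal K V c)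
    (hd : IsHorizontal K V d) (h0 : c 0 = d 0) (t : ℝ) :
    HorizontallyJoined K V (c t) (d t) (horizontalDist K V (c t) (d t)) :=
  ((hc.horizontallyJoined_abs_sub t 0).trans
    (h0 ▸ hd.horizontallyJoined_abs_sub 0 t)).horizontalDist hK

theorem lipschitzWith_horizontalDist (hK : IsCompact K) (hc : IsHorizontal K V c)
    (hd : IsHorizontal K V d) (h0 : c 0 = d 0) :
    LipschitzWith 2 fun t => horizontalDist K V (c t) (d t) := by
  refine LipschitzWith.of_le_add_mul 2 fun s t => ?_
  have hst := (hc.horizontallyJoined_abs_sub s t).trans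
    ((hc.horizontallyJoined_horizontalDist hK hd h0 t).trans (hd.horizontallyJoined_abs_sub t s))
  have hle := hst.horizontalDist_le
  rw [abs_sub_comm t s] at hle
  rw [Real.dist_eq]
  push_cast
  linarith

/-- Joining `c t` to `d t` by the unique geodesic depends continuously on `t`, since geodesics form
a compact set. -/
theorem exists_geodesicHomotopy (hK : IsCompact K) (hgl : ∀ x ∈ K, IsGroupLike x)
    (hc : IsHorizontal K V c) (hd : IsHorizontal K V d) (h0 : c 0 = d 0) :
    ∃ H : unitInterval × ℝ → List ι → ℝ, Continuous H ∧ (∀ q, H q ∈ K) ∧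
      (∀ t, H (0, t) = c t) ∧ (∀ t, H (1, t) = d t) ∧ ∀ s t, c t = d t → H (s, t) = c t := by
  set r : ℝ → ℝ := fun t => horizontalDist K V (c t) (d t) with hr
  have hrcont : Continuous r := (hc.lipschitzWith_horizontalDist hK hd h0).continuous
  choose hr0 e he hec hed using hc.horizontallyJoined_horizontalDist hK hd h0
  refine ⟨fun q => e q.2 (q.1 * r q.2), ?_, fun q => (he _).mem _, fun t => by simp [hec],
    fun t => by simp [hr, hed], fun s t hcd => ?_⟩
  · have := compactSpace_isHorizontal (V := V) hK
    refine continuous_of_forall_mem_closed_eq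
      (R := {q : (unitInterval × ℝ) × {e // IsHorizontal K V e} |
        q.2.1 0 = c q.1.2 ∧ q.2.1 (r q.1.2) = d q.1.2})
      (e := fun q => q.2.1 (q.1.1 * r q.1.2)) ?_
      (fun q => ⟨⟨e q.2, he q.2⟩, hec q.2, hed q.2⟩) ?_ ?_
    · have hccont := hc.continuous
      have hdcont := hd.continuous
      refine IsClosed.inter (isClosed_eq ?_ (by fun_prop)) (isClosed_eq ?_ (by fun_prop))
      · exact (continuous_apply 0).comp (continuous_subtype_val.comp continuous_snd)
      · exact continuous_eval_isHorizontal.comp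
          ((hrcont.comp (continuous_snd.comp continuous_fst)).prodMk continuous_snd)
    · exact continuous_eval_isHorizontal.comp ((Continuous.mul (by fun_prop)
        (hrcont.comp (continuous_snd.comp continuous_fst))).prodMk continuous_snd)
    · rintro ⟨⟨s, t⟩, f⟩ ⟨hfc, hfd⟩
      exact (eqOn_of_horizontalDist_eq hK hgl (he t) f.2 ((hec t).trans hfc.symm)
        ((hed t).trans hfd.symm) (by rw [hec, hed])
        ⟨mul_nonneg s.2.1 (hr0 t), mul_le_of_le_one_left (hr0 t) s.2.2⟩).symm
  · have hrt : r t ≤ 0 := by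
      simpa [hr, ← hcd] using (hc.horizontallyJoined_abs_sub t t).horizontalDist_le
    simp [hrt.antisymm (hr0 t), hec]

end IsHorizontal

end GeodesicHomotopy

section ThinHomotopy

variable {V : ℝ≥0} {α β γ : ℝ → Fin n → ℝ} {p : Fin n → ℝ}

theorem isHorizontal_signatureLift_projIcc (hγ : LipschitzWith V γ) {K : Set (List (Fin n) → ℝ)}
    (hK : signatureLift γ '' Icc 0 1 ⊆ K) :
    IsHorizontal K V fun t => signatureLift γ (projIcc (0 : ℝ) 1 zero_le_one t) where
  mem _ := hK (mem_image_of_mem _ (Subtype.prop _))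
  step _ _ := (horizontalStep_signatureLift hγ (Subtype.prop _) (Subtype.prop _)).mono
    (abs_nonneg _) (abs_projIcc_sub_projIcc zero_le_one)

theorem exists_isThinHomotopy_of_signatureLift_eq (hα : LipschitzWith V α) (hα0 : α 0 = p)
    (hα1 : α 1 = p) (hβ : LipschitzWith V β) (hβ0 : β 0 = p)
    (hsig : signatureLift α 1 = signatureLift β 1) : ∃ η, IsThinHomotopy p α β η := by
  set K := signatureLift α '' Icc 0 1 ∪ signatureLift β '' Icc 0 1
  have hK : IsCompact K := (isCompact_Icc.image (continuous_signatureLift hα)).union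
    (isCompact_Icc.image (continuous_signatureLift hβ))
  have hgl : ∀ x ∈ K, IsGroupLike x := by
    rintro x (⟨t, -, rfl⟩ | ⟨t, -, rfl⟩)
    exacts [isGroupLike_signatureLift hα t, isGroupLike_signatureLift hβ t]
  obtain ⟨H, hHcont, hHK, hH0, hH1, hHeq⟩ :=
    (isHorizontal_signatureLift_projIcc hα subset_union_left).exists_geodesicHomotopy hK hgl
      (isHorizontal_signatureLift_projIcc hβ subset_union_right) (by
        simpa using signatureLift_zero_eq α β)
  set project : (List (Fin n) → ℝ) → Fin n → ℝ := fun x i => p i + x [i] with hproject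
  have hprojα : ∀ t, project (signatureLift α t) = α t := fun t => by
    funext i
    simp [hproject, signatureLift_singleton hα, hα0]
  have hprojβ : ∀ t, project (signatureLift β t) = β t := fun t => by
    funext i
    simp [hproject, signatureLift_singleton hβ, hβ0]
  refine ⟨fun q => project (H (projIcc 0 1 zero_le_one q.1, q.2)), ?_, fun t ht => ?_,
    fun t ht => ?_, fun s _ => ⟨?_, ?_⟩, ?_⟩
  · exact Continuous.continuousOn (by fun_prop)
  · simp [hH0, hprojα, projIcc_of_mem _ ht]
  · simp [hH1, hprojβ, projIcc_of_mem _ ht]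
  · have heq : signatureLift α 0 = signatureLift β 0 := signatureLift_zero_eq α β
    simp [hHeq _ 0 (by simpa using heq), hprojα, hα0]
  · simp [hHeq _ 1 (by simpa using hsig), hprojα, hα1]
  · rintro _ ⟨q, -, rfl⟩
    rcases hHK (projIcc 0 1 zero_le_one q.1, q.2) with ⟨t, ht, heq⟩ | ⟨t, ht, heq⟩
    · exact Or.inl ⟨t, ht, by simp only [← heq, hprojα]⟩
    · exact Or.inr ⟨t, ht, by simp only [← heq, hprojβ]⟩

end ThinHomotopy

/-! ### Monodromy of a local transport -/

section Monodromy

variable {X M : Type*} {T : X → X → M → M} {c d : ℝ → X} {u v : ℝ → M}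

/-- The curve of states `u` is parallel over `c : [0, 1] → X` if each state is transported to the
nearby ones. -/
def IsParallel (T : X → X → M → M) (c : ℝ → X) (u : ℝ → M) : Prop :=
  ∀ s ∈ Icc (0 : ℝ) 1, ∀ᶠ t in 𝓝[Icc 0 1] s, u t = T (c s) (c t) (u s)

theorem IsParallel.congr (hu : IsParallel T d u) (hcd : EqOn c d (Icc 0 1)) :
    IsParallel T c u := fun s hs => by
  filter_upwards [hu s hs, self_mem_nhdsWithin] with t hut ht
  rw [hcd hs, hcd ht, hut]

variable [PseudoMetricSpace X] {S : Set X} {δ : ℝ}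

/-- A family of maps `T x y : M → M` is a local transport over `S` at scale `δ` if it is functorial
for moves of size less than `δ` through points of `S`: a flat connection in discrete form. -/
structure IsLocalTransport (S : Set X) (δ : ℝ) (T : X → X → M → M) : Prop where
  self : ∀ x m, T x x m = m
  trans : ∀ x, ∀ y ∈ S, ∀ z, dist x y < δ → dist y z < δ → ∀ m, T y z (T x y m) = T x z m

theorem eventually_dist_lt_of_continuousOn {I : Set ℝ} (hc : ContinuousOn c I) (hδ : 0 < δ) {s : ℝ}
    (hs : s ∈ I) : ∀ᶠ t in 𝓝[I] s, dist (c s) (c t) < δ := by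
  simpa only [dist_comm] using (Metric.tendsto_nhds.1 (hc s hs)) δ hδ

namespace IsLocalTransport

theorem apply_one_eq_of_isParallel (hT : IsLocalTransport S δ T) (hδ : 0 < δ)
    (hc : ContinuousOn c (Icc 0 1)) (hcS : MapsTo c (Icc 0 1) S) (hu : IsParallel T c u)
    (hv : IsParallel T c v) (h0 : u 0 = v 0) : u 1 = v 1 := by
  refine isPreconnected_Icc.induction₂' (fun s t => u s = v s → u t = v t) (fun s hs => ?_)
    (fun _ _ _ _ _ _ hrs hst => hst ∘ hrs) (left_mem_Icc.2 zero_le_one)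
    (right_mem_Icc.2 zero_le_one) h0
  filter_upwards [hu s hs, hv s hs, eventually_dist_lt_of_continuousOn hc hδ hs,
    self_mem_nhdsWithin] with t hut hvt hdist ht
  refine ⟨fun h => by rw [hut, hvt, h], fun h => ?_⟩
  have hback : ∀ m, T (c t) (c s) (T (c s) (c t) m) = m := fun m => by
    rw [hT.trans _ _ (hcS ht) _ hdist (by rwa [dist_comm]), hT.self]
  rw [← hback (u s), ← hut, h, hvt, hback]

theorem exists_isParallel_of_dist_lt (hT : IsLocalTransport S δ T) (hδ : 0 < δ)
    (hc : ContinuousOn c (Icc 0 1)) (hd : ContinuousOn d (Icc 0 1)) (hcS : MapsTo c (Icc 0 1) S)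
    (hdS : MapsTo d (Icc 0 1) S) (hcd : ∀ t ∈ Icc (0 : ℝ) 1, dist (c t) (d t) < δ)
    (h0 : c 0 = d 0) (h1 : c 1 = d 1) (hu : IsParallel T c u) :
    ∃ v, IsParallel T d v ∧ v 0 = u 0 ∧ v 1 = u 1 := by
  refine ⟨fun t => T (c t) (d t) (u t), fun s hs => ?_, by simp only [h0, hT.self],
    by simp only [h1, hT.self]⟩
  filter_upwards [hu s hs, eventually_dist_lt_of_continuousOn hc hδ hs,
    eventually_dist_lt_of_continuousOn hd hδ hs, self_mem_nhdsWithin] with t hut hct hdt ht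
  rw [hut, hT.trans _ _ (hcS ht) _ hct (hcd t ht), hT.trans _ _ (hdS hs) _ (hcd s hs) hdt]

theorem apply_one_eq_of_homotopy (hT : IsLocalTransport S δ T) (hδ : 0 < δ) {η : ℝ × ℝ → X}
    (hη : ContinuousOn η (Icc 0 1 ×ˢ Icc 0 1)) (hηS : MapsTo η (Icc 0 1 ×ˢ Icc 0 1) S)
    (h0 : ∀ s ∈ Icc (0 : ℝ) 1, η (s, 0) = η (0, 0)) (h1 : ∀ s ∈ Icc (0 : ℝ) 1, η (s, 1) = η (0, 1))
    (hu : IsParallel T (fun t => η (0, t)) u) (hv : IsParallel T (fun t => η (1, t)) v)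
    (huv : u 0 = v 0) : u 1 = v 1 := by
  have hrow : ∀ s ∈ Icc (0 : ℝ) 1, ContinuousOn (fun t => η (s, t)) (Icc 0 1) := fun s hs =>
    hη.comp (by fun_prop) fun t ht => ⟨hs, ht⟩
  have hrowS : ∀ s ∈ Icc (0 : ℝ) 1, MapsTo (fun t => η (s, t)) (Icc 0 1) S := fun s hs t ht =>
    hηS ⟨hs, ht⟩
  have hdeform : ∃ w, IsParallel T (fun t => η (1, t)) w ∧ w 0 = u 0 ∧ w 1 = u 1 := by
    refine isPreconnected_Icc.induction₂' (fun r s => ∀ u, IsParallel T (fun t => η (r, t)) u →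
      ∃ w, IsParallel T (fun t => η (s, t)) w ∧ w 0 = u 0 ∧ w 1 = u 1) (fun r hr => ?_)
      (fun _ _ _ _ _ _ hqr hrs u hu => ?_) (left_mem_Icc.2 zero_le_one)
      (right_mem_Icc.2 zero_le_one) u hu
    · obtain ⟨ε, hε, hclose⟩ := Metric.uniformContinuousOn_iff.1
        ((isCompact_Icc.prod isCompact_Icc).uniformContinuousOn_of_continuous hη) δ hδ
      filter_upwards [self_mem_nhdsWithin, mem_nhdsWithin_of_mem_nhds (Metric.ball_mem_nhds r hε)]
        with s hs hsr
      have hdist : ∀ t ∈ Icc (0 : ℝ) 1, dist (η (r, t)) (η (s, t)) < δ := fun t ht =>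
        hclose _ ⟨hr, ht⟩ _ ⟨hs, ht⟩ (by simpa [Prod.dist_eq, dist_comm r, hε] using hsr)
      have hends0 : η (r, 0) = η (s, 0) := by rw [h0 r hr, h0 s hs]
      have hends1 : η (r, 1) = η (s, 1) := by rw [h1 r hr, h1 s hs]
      exact ⟨fun _ => hT.exists_isParallel_of_dist_lt hδ (hrow r hr) (hrow s hs) (hrowS r hr)
          (hrowS s hs) hdist hends0 hends1,
        fun _ => hT.exists_isParallel_of_dist_lt hδ (hrow s hs) (hrow r hr) (hrowS s hs)
          (hrowS r hr) (fun t ht => dist_comm (η (r, t)) _ ▸ hdist t ht) hends0.symm hends1.symm⟩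
    · obtain ⟨v, hv, hv0, hv1⟩ := hqr u hu
      obtain ⟨w, hw, hw0, hw1⟩ := hrs v hv
      exact ⟨w, hw, hw0.trans hv0, hw1.trans hv1⟩
  obtain ⟨w, hw, hw0, hw1⟩ := hdeform
  rw [← hw1]
  exact hT.apply_one_eq_of_isParallel hδ (hrow 1 (right_mem_Icc.2 zero_le_one))
    (hrowS 1 (right_mem_Icc.2 zero_le_one)) hw hv (hw0.trans huv)

end IsLocalTransport

end Monodromy

/-! ### Iterated integrals of one-forms depending on one coordinate -/

section WeightedIterInt

/-- A weighted letter `(i, f)` stands for the one-form `f(x_i) dx_i`. -/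
abbrev WeightedLetter (n : ℕ) : Type := Fin n × C(ℝ, ℝ)

/-- The iterated integral over `[0, t]` of a word of one-forms `f(x_i) dx_i`, with the latest letter
first as in `chenS`. -/
def weightedIterInt (γ : ℝ → Fin n → ℝ) : List (WeightedLetter n) → ℝ → ℝ
  | [], _ => 1
  | a :: w, t => ∫ s in (0 : ℝ)..t, weightedIterInt γ w s * a.2 (γ s a.1) * pathDeriv γ a.1 s

variable {V : ℝ≥0} {γ : ℝ → Fin n → ℝ}

theorem weightedIterInt_map_one (γ : ℝ → Fin n → ℝ) (w : List (Fin n)) (t : ℝ) :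
    weightedIterInt γ (w.map fun i => (i, 1)) t = chenS γ w t := by
  induction w generalizing t with
  | nil => rfl
  | cons i w ih => simp [weightedIterInt, chenS, ih]

theorem continuous_comp_coord (hγ : LipschitzWith V γ) (a : WeightedLetter n) :
    Continuous fun t => a.2 (γ t a.1) :=
  a.2.continuous.comp (lipschitzWith_coord hγ a.1).continuous

theorem continuous_weightedIterInt (hγ : LipschitzWith V γ) (w : List (WeightedLetter n)) :
    Continuous (weightedIterInt γ w) := by
  induction w with
  | nil => exact continuous_const
  | cons a w ih =>
    exact continuous_integral_mul_deriv (lipschitzWith_coord hγ a.1)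
      (ih.mul (continuous_comp_coord hγ a)) 0

theorem weightedIterInt_cons_sub (hγ : LipschitzWith V γ) (a : WeightedLetter n)
    (w : List (WeightedLetter n)) (s t : ℝ) :
    weightedIterInt γ (a :: w) t - weightedIterInt γ (a :: w) s =
      ∫ r in s..t, weightedIterInt γ w r * a.2 (γ r a.1) * pathDeriv γ a.1 r :=
  have hcont := (continuous_weightedIterInt hγ w).mul (continuous_comp_coord hγ a)
  integral_interval_sub_left (intervalIntegrable_mul_pathDeriv hγ a.1 hcont 0 t)
    (intervalIntegrable_mul_pathDeriv hγ a.1 hcont 0 s)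

theorem weightedIterInt_append_cons_add (hγ : LipschitzWith V γ) (u v : List (WeightedLetter n))
    (i : Fin n) (f g : C(ℝ, ℝ)) (t : ℝ) :
    weightedIterInt γ (u ++ (i, f + g) :: v) t =
      weightedIterInt γ (u ++ (i, f) :: v) t + weightedIterInt γ (u ++ (i, g) :: v) t := by
  have hint : ∀ (a : WeightedLetter n) w t, IntervalIntegrable
      (fun s => weightedIterInt γ w s * a.2 (γ s a.1) * pathDeriv γ a.1 s) volume 0 t :=
    fun a w t => intervalIntegrable_mul_pathDeriv hγ a.1
      ((continuous_weightedIterInt hγ w).mul (continuous_comp_coord hγ a)) 0 t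
  induction u generalizing t with
  | nil =>
    simp only [List.nil_append, weightedIterInt, ContinuousMap.add_apply, mul_add, add_mul]
    exact intervalIntegral.integral_add (hint (i, f) v t) (hint (i, g) v t)
  | cons a u ih =>
    simp only [List.cons_append, weightedIterInt, ih, add_mul]
    exact intervalIntegral.integral_add (hint a _ t) (hint a _ t)

end WeightedIterInt

/-! ### Thin homotopies and separated words -/

section SeparatedWords

variable {V : ℝ≥0} {γ : ℝ → Fin n → ℝ} {X : Set (Fin n → ℝ)} {δ : ℝ}

/-- Two one-forms `f(x_i) dx_i` and `g(x_j) dx_j` are separated at scale `δ` along `X` if near each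
point of `X` the product `f(x_i) g(x_j')` vanishes, also at different points `x`, `x'`. -/
def SeparatedAlong (X : Set (Fin n → ℝ)) (δ : ℝ) (a b : WeightedLetter n) : Prop :=
  ∀ x ∈ X, ∀ s ∈ Metric.ball (x a.1) δ, ∀ t ∈ Metric.ball (x b.1) δ, a.2 s * b.2 t = 0

theorem SeparatedAlong.integral_mul_integral_eq_zero {a b : WeightedLetter n}
    (h : SeparatedAlong X δ a b) {x : Fin n → ℝ} (hx : x ∈ X) {s s' t t' : ℝ}
    (hs : s ∈ Metric.ball (x a.1) δ) (hs' : s' ∈ Metric.ball (x a.1) δ)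
    (ht : t ∈ Metric.ball (x b.1) δ) (ht' : t' ∈ Metric.ball (x b.1) δ) :
    (∫ r in s..s', a.2 r) * ∫ q in t..t', b.2 q = 0 := by
  have hzero : ∀ r ∈ uIcc s s', a.2 r * ∫ q in t..t', b.2 q = 0 := fun r hr => by
    rw [← intervalIntegral.integral_const_mul]
    refine (integral_congr (g := fun _ => 0) fun q hq => ?_).trans (by simp)
    exact h x hx r ((convex_ball _ _).ordConnected.uIcc_subset hs hs' hr) q
      ((convex_ball _ _).ordConnected.uIcc_subset ht ht' hq)
  rw [← intervalIntegral.integral_mul_const, integral_congr hzero]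
  simp

/-- Words in which consecutive one-forms are separated. -/
abbrev SeparatedWord (X : Set (Fin n → ℝ)) (δ : ℝ) : Type :=
  {w : List (WeightedLetter n) // w.IsChain (SeparatedAlong X δ)}

/-- The transport of the iterated integrals of separated words along a short path from `x` to `y`.
By separation at most one letter of a word is integrated over a short path, and its contribution
depends only on the endpoints. -/
def separatedTransport (x y : Fin n → ℝ) (v : SeparatedWord X δ → ℝ) : SeparatedWord X δ → ℝ
  | ⟨[], h⟩ => v ⟨[], h⟩
  | ⟨a :: w, h⟩ => v ⟨a :: w, h⟩ + (∫ s in x a.1..y a.1, a.2 s) * v ⟨w, h.tail⟩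

theorem isLocalTransport_separatedTransport (hδ : 0 < δ) :
    IsLocalTransport X δ (separatedTransport (X := X) (δ := δ)) where
  self x v := by
    funext w
    rcases w with ⟨_ | ⟨a, w⟩, hw⟩ <;> simp [separatedTransport]
  trans x y hy z hxy hyz v := by
    have hxy_ball : ∀ i, x i ∈ Metric.ball (y i) δ := fun i => (dist_le_pi_dist x y i).trans_lt hxy
    have hyz_ball : ∀ i, z i ∈ Metric.ball (y i) δ := fun i =>
      (dist_le_pi_dist z y i).trans_lt (dist_comm y z ▸ hyz)
    have hadd : ∀ a : WeightedLetter n, ∫ s in x a.1..z a.1, a.2 s =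
        (∫ s in x a.1..y a.1, a.2 s) + ∫ s in y a.1..z a.1, a.2 s := fun a =>
      (integral_add_adjacent_intervals (a.2.continuous.intervalIntegrable _ _)
        (a.2.continuous.intervalIntegrable _ _)).symm
    funext w
    rcases w with ⟨_ | ⟨a, _ | ⟨b, w⟩⟩, hw⟩
    · rfl
    · simp only [separatedTransport, hadd a]
      ring
    · have hcross := (List.isChain_cons_cons.1 hw).1.integral_mul_integral_eq_zero hy
        (Metric.mem_ball_self hδ) (hyz_ball a.1) (hxy_ball b.1) (Metric.mem_ball_self hδ)
      simp only [separatedTransport, hadd a]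
      linear_combination v ⟨w, hw.tail.tail⟩ * hcross

theorem weightedIterInt_sub_mul_eq_zero (hγ : LipschitzWith V γ) {s r : ℝ} (hs : γ s ∈ X)
    (hball : ∀ q ∈ uIcc s r, γ q ∈ Metric.ball (γ s) δ) {a : WeightedLetter n}
    {w : List (WeightedLetter n)} (hw : (a :: w).IsChain (SeparatedAlong X δ)) :
    (weightedIterInt γ w r - weightedIterInt γ w s) * a.2 (γ r a.1) = 0 := by
  cases w with
  | nil => simp [weightedIterInt]
  | cons b w =>
    have hcoord : ∀ q ∈ uIcc s r, ∀ i, γ q i ∈ Metric.ball (γ s i) δ := fun q hq i =>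
      (dist_le_pi_dist (γ q) (γ s) i).trans_lt (hball q hq)
    rw [weightedIterInt_cons_sub hγ, ← intervalIntegral.integral_mul_const]
    refine (integral_congr (g := fun _ => 0) fun q hq => ?_).trans (by simp)
    have hab := (List.isChain_cons_cons.1 hw).1 _ hs _ (hcoord r right_mem_uIcc a.1) _
      (hcoord q hq b.1)
    linear_combination weightedIterInt γ w q * pathDeriv γ b.1 q * hab

theorem isParallel_weightedIterInt (hγ : LipschitzWith V γ) (hδ : 0 < δ)
    (hX : MapsTo γ (Icc 0 1) X) :
    IsParallel separatedTransport γ fun t (w : SeparatedWord X δ) => weightedIterInt γ w t := by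
  intro s hs
  obtain ⟨ε, hε, hball⟩ := Metric.continuous_iff.1 hγ.continuous s δ hδ
  filter_upwards [mem_nhdsWithin_of_mem_nhds (Metric.ball_mem_nhds s hε)] with t ht
  have hst : ∀ q ∈ uIcc s t, γ q ∈ Metric.ball (γ s) δ := fun q hq =>
    hball q ((convex_ball _ _).ordConnected.uIcc_subset (Metric.mem_ball_self hε) ht hq)
  funext w
  rcases w with ⟨_ | ⟨a, w⟩, hw⟩
  · rfl
  have hconst : ∫ r in s..t, weightedIterInt γ w r * a.2 (γ r a.1) * pathDeriv γ a.1 r =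
      (∫ r in s..t, a.2 (γ r a.1) * pathDeriv γ a.1 r) * weightedIterInt γ w s := by
    rw [← intervalIntegral.integral_mul_const]
    refine integral_congr fun r hr => ?_
    have hzero := weightedIterInt_sub_mul_eq_zero hγ (hX hs)
      (fun q hq => hst q (uIcc_subset_uIcc_left hr hq)) hw
    linear_combination pathDeriv γ a.1 r * hzero
  have hsubst : ∫ r in s..t, a.2 (γ r a.1) * pathDeriv γ a.1 r =
      ∫ x in γ s a.1..γ t a.1, a.2 x :=
    integral_comp_mul_deriv_of_lipschitzWith (lipschitzWith_coord hγ a.1) a.2.continuous s t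
  simp only [separatedTransport]
  rw [← hsubst, ← hconst, ← weightedIterInt_cons_sub hγ]
  ring

theorem IsThinHomotopy.weightedIterInt_eq {α β : ℝ → Fin n → ℝ} {p : Fin n → ℝ}
    {η : ℝ × ℝ → Fin n → ℝ} (hη : IsThinHomotopy p α β η) (hα : LipschitzWith V α)
    (hβ : LipschitzWith V β) (hδ : 0 < δ) {w : List (WeightedLetter n)}
    (hw : w.IsChain (SeparatedAlong (α '' Icc 0 1 ∪ β '' Icc 0 1) δ)) :
    weightedIterInt α w 1 = weightedIterInt β w 1 := by
  obtain ⟨hcont, hηα, hηβ, hends, himage⟩ := hη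
  have zero_mem : (0 : ℝ) ∈ Icc (0 : ℝ) 1 := left_mem_Icc.2 zero_le_one
  have hparα := isParallel_weightedIterInt (X := α '' Icc 0 1 ∪ β '' Icc 0 1) hα hδ
    fun t ht => Or.inl (mem_image_of_mem α ht)
  have hparβ := isParallel_weightedIterInt (X := α '' Icc 0 1 ∪ β '' Icc 0 1) hβ hδ
    fun t ht => Or.inr (mem_image_of_mem β ht)
  refine congrFun ((isLocalTransport_separatedTransport hδ).apply_one_eq_of_homotopy hδ hcont
    (mapsTo_iff_image_subset.2 himage) (fun s hs => ?_) (fun s hs => ?_) (hparα.congr hηα)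
    (hparβ.congr hηβ) ?_) ⟨w, hw⟩
  · rw [(hends s hs).1, (hends 0 zero_mem).1]
  · rw [(hends s hs).2, (hends 0 zero_mem).2]
  · funext w
    rcases w with ⟨_ | ⟨a, w⟩, hw⟩ <;> simp [weightedIterInt]

end SeparatedWords

/-! ### Measures swept out by weighted letters -/

section NullSets

theorem volume_eq_zero_of_dist_le_mul_dist {f : ℝ → ℝ} {s : Set ℝ} {K : ℝ≥0}
    (hK : ∀ x ∈ s, ∀ y ∈ s, dist x y ≤ K * dist (f x) (f y)) (hs : volume (f '' s) = 0) :
    volume s = 0 := by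
  have hanti : AntilipschitzWith K (s.domRestrict f) :=
    AntilipschitzWith.of_le_mul_dist fun x y => hK x x.2 y y.2
  have hle := hanti.le_hausdorffMeasure_image zero_le_one univ
  rw [image_univ, range_domRestrict, ← isometry_subtype_coe.hausdorffMeasure_image
    (Or.inl zero_le_one), image_univ, Subtype.range_coe, hausdorffMeasure_real, hs, mul_zero] at hle
  exact le_antisymm hle zero_le

theorem volume_deriv_ne_zero_inter_preimage_eq_zero (f : ℝ → ℝ) {Z : Set ℝ} (hZ : volume Z = 0) :
    volume ({t | deriv f t ≠ 0} ∩ f ⁻¹' Z) = 0 := by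
  set s := {t | deriv f t ≠ 0}
  have hderiv : ∀ t ∈ s, HasFDerivWithinAt f (fderiv ℝ f t) s t := fun t ht =>
    (differentiableAt_of_deriv_ne_zero ht).hasFDerivAt.hasFDerivWithinAt
  obtain ⟨P, A, -, -, hsP, happrox, hA⟩ :=
    exists_partition_approximatesLinearOn_of_hasFDerivWithinAt f s (fderiv ℝ f) hderiv
      (fun A => if A 1 = 0 then 1 else ‖A 1‖₊ / 2) fun A => by split_ifs with h <;> simp [h]
  refine measure_mono_null (t := ⋃ k, s ∩ P k ∩ f ⁻¹' Z) (fun t ht => ?_)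
    (measure_iUnion_null fun k => ?_)
  · obtain ⟨k, hk⟩ := mem_iUnion.1 (hsP ht.1)
    exact mem_iUnion.2 ⟨k, ⟨ht.1, hk⟩, ht.2⟩
  rcases s.eq_empty_or_nonempty with hempty | hne
  · simp [hempty]
  obtain ⟨y, hy, hAy⟩ := hA hne k
  have hA1 : A k 1 ≠ 0 := by rwa [hAy, fderiv_apply_one_eq_deriv]
  have hlower : ∀ x ∈ s ∩ P k, ∀ y ∈ s ∩ P k, ‖A k 1‖ / 2 * ‖x - y‖ ≤ ‖f x - f y‖ := by
    intro x hx y hy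
    have hxy : ‖f x - f y - A k (x - y)‖ ≤ ‖A k 1‖ / 2 * ‖x - y‖ := by
      simpa [hA1] using happrox k x hx y hy
    have hlin : ‖A k (x - y)‖ = ‖A k 1‖ * ‖x - y‖ := by
      rw [← norm_mul, mul_comm, ← smul_eq_mul, ← map_smul, smul_eq_mul, mul_one]
    linarith [norm_sub_norm_le (A k (x - y)) (f x - f y), norm_sub_rev (f x - f y) (A k (x - y))]
  refine volume_eq_zero_of_dist_le_mul_dist (f := f) (K := (‖A k 1‖₊ / 2)⁻¹)
    (fun x hx y hy => ?_) (measure_mono_null ?_ hZ)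
  · rw [NNReal.coe_inv, ← div_eq_inv_mul, le_div_iff₀' (by simpa using hA1)]
    simpa [dist_eq_norm] using hlower x hx.1 y hy.1
  · rintro _ ⟨t, ht, rfl⟩
    exact ht.2

theorem volume_image_eq_zero_of_lipschitzOnWith {V : ℝ≥0} {c : ℝ → ℝ × ℝ} {s : Set ℝ}
    (hc : LipschitzOnWith V c s) : volume (c '' s) = 0 := by
  have hdim : dimH (c '' s) < (2 : ℝ≥0) :=
    (hc.dimH_image_le.trans ((dimH_mono (subset_univ s)).trans_eq Real.dimH_univ)).trans_lt
      (by norm_num)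
  simpa only [NNReal.coe_ofNat, hausdorffMeasure_prod_real] using hausdorffMeasure_of_dimH_lt hdim

end NullSets

section LetterMeasure

variable {V : ℝ≥0} {γ : ℝ → Fin n → ℝ}

/-- The total variation, pushed forward to the `i`-th axis, of the one-form `f(x_i) dx_i` along the
path `γ`. -/
def letterMeasure (γ : ℝ → Fin n → ℝ) (a : WeightedLetter n) : Measure ℝ :=
  ((volume.restrict (Icc 0 1)).withDensity fun t => ‖a.2 (γ t a.1) * pathDeriv γ a.1 t‖ₑ).map
    fun t => γ t a.1

theorem measurable_comp_mul_pathDeriv (hγ : LipschitzWith V γ) (a : WeightedLetter n) :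
    Measurable fun t => a.2 (γ t a.1) * pathDeriv γ a.1 t :=
  (continuous_comp_coord hγ a).measurable.mul (measurable_deriv _)

theorem lintegral_letterMeasure (hγ : LipschitzWith V γ) (a : WeightedLetter n) {g : ℝ → ℝ≥0∞}
    (hg : Measurable g) : ∫⁻ x, g x ∂letterMeasure γ a =
      ∫⁻ t in Icc 0 1, ‖a.2 (γ t a.1) * pathDeriv γ a.1 t‖ₑ * g (γ t a.1) := by
  have hcoord := (lipschitzWith_coord hγ a.1).continuous.measurable
  rw [letterMeasure, lintegral_map hg hcoord]
  exact lintegral_withDensity_eq_lintegral_mul _ (measurable_comp_mul_pathDeriv hγ a).enorm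
    (hg.comp hcoord)

theorem letterMeasure_univ (hγ : LipschitzWith V γ) (a : WeightedLetter n) :
    letterMeasure γ a univ = ∫⁻ t in Icc 0 1, ‖a.2 (γ t a.1) * pathDeriv γ a.1 t‖ₑ := by
  rw [← lintegral_one, lintegral_letterMeasure hγ a measurable_const]
  simp only [mul_one]

theorem letterMeasure_mul_univ (hγ : LipschitzWith V γ) (i : Fin n) (f φ : C(ℝ, ℝ)) :
    letterMeasure γ (i, f * φ) univ = ∫⁻ x, ‖φ x‖ₑ ∂letterMeasure γ (i, f) := by
  rw [letterMeasure_univ hγ, lintegral_letterMeasure hγ _ φ.continuous.measurable.enorm]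
  refine lintegral_congr fun t => ?_
  rw [← enorm_mul, ContinuousMap.mul_apply, mul_right_comm]

theorem isFiniteMeasure_letterMeasure (hγ : LipschitzWith V γ) (a : WeightedLetter n) :
    IsFiniteMeasure (letterMeasure γ a) := by
  have hint := (intervalIntegrable_iff_integrableOn_Icc_of_le zero_le_one).1
    (intervalIntegrable_mul_pathDeriv hγ a.1 (continuous_comp_coord hγ a) 0 1)
  exact ⟨(letterMeasure_univ hγ a).trans_lt hint.hasFiniteIntegral⟩

theorem letterMeasure_apply (hγ : LipschitzWith V γ) (a : WeightedLetter n) {s : Set ℝ}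
    (hs : MeasurableSet s) : letterMeasure γ a s =
      ∫⁻ t in Icc 0 1 ∩ (fun t => γ t a.1) ⁻¹' s, ‖a.2 (γ t a.1) * pathDeriv γ a.1 t‖ₑ := by
  have hpre := (lipschitzWith_coord hγ a.1).continuous.measurable hs
  rw [letterMeasure, Measure.map_apply (lipschitzWith_coord hγ a.1).continuous.measurable hs,
    withDensity_apply _ hpre, Measure.restrict_restrict hpre, inter_comm]

theorem letterMeasure_compl_image (hγ : LipschitzWith V γ) (a : WeightedLetter n) :
    letterMeasure γ a ((fun t => γ t a.1) '' Icc 0 1)ᶜ = 0 := by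
  have himage : IsCompact ((fun t => γ t a.1) '' Icc 0 1) :=
    isCompact_Icc.image (lipschitzWith_coord hγ a.1).continuous
  rw [letterMeasure_apply hγ a himage.measurableSet.compl, preimage_compl,
    ← sdiff_eq, sdiff_eq_empty.2 (subset_preimage_image _ _), setLIntegral_empty]

theorem letterMeasure_absolutelyContinuous (hγ : LipschitzWith V γ) (a : WeightedLetter n) :
    letterMeasure γ a ≪ volume := by
  refine Measure.AbsolutelyContinuous.mk fun s hs hzero => ?_
  have hpre := (lipschitzWith_coord hγ a.1).continuous.measurable hs
  rw [letterMeasure_apply hγ a hs, setLIntegral_eq_zero_iff (measurableSet_Icc.inter hpre)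
    (measurable_comp_mul_pathDeriv hγ a).enorm]
  filter_upwards [measure_eq_zero_iff_ae_notMem.1
    (volume_deriv_ne_zero_inter_preimage_eq_zero (fun t => γ t a.1) hzero)] with t ht hts
  have hderiv : pathDeriv γ a.1 t = 0 := by_contra fun h => ht ⟨h, hts.2⟩
  rw [hderiv, mul_zero, enorm_zero]

theorem enorm_weightedIterInt_le (hγ : LipschitzWith V γ) (w : List (WeightedLetter n)) {t : ℝ}
    (ht : t ∈ Icc (0 : ℝ) 1) :
    ‖weightedIterInt γ w t‖ₑ ≤ (w.map fun a => letterMeasure γ a univ).prod := by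
  induction w generalizing t with
  | nil => simp [weightedIterInt]
  | cons a w ih =>
    set M := (w.map fun a => letterMeasure γ a univ).prod
    rw [List.map_cons, List.prod_cons, weightedIterInt, integral_of_le ht.1]
    calc ‖∫ s in Ioc 0 t, weightedIterInt γ w s * a.2 (γ s a.1) * pathDeriv γ a.1 s‖ₑ
        ≤ ∫⁻ s in Ioc 0 t, ‖weightedIterInt γ w s * a.2 (γ s a.1) * pathDeriv γ a.1 s‖ₑ :=
          enorm_integral_le_lintegral_enorm _
      _ ≤ ∫⁻ s in Icc 0 1, ‖a.2 (γ s a.1) * pathDeriv γ a.1 s‖ₑ * M := by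
          refine (lintegral_mono_set (Ioc_subset_Icc_self.trans (Icc_subset_Icc_right ht.2))).trans
            (setLIntegral_mono' measurableSet_Icc fun s hs => ?_)
          rw [mul_assoc, enorm_mul, mul_comm]
          gcongr
          exact ih hs
      _ = letterMeasure γ a univ * M := by
          rw [lintegral_mul_const _ (measurable_comp_mul_pathDeriv hγ a).enorm,
            letterMeasure_univ hγ]

end LetterMeasure

/-! ### Biadditive forms dominated by a product measure -/

section Biadditive

theorem exists_partitionOfUnity_dist_lt {X : Type*} [MetricSpace X] {K : Set X} (hK : IsCompact K)
    {ε : ℝ} (hε : 0 < ε) :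
    ∃ (s : Finset X) (ρ : PartitionOfUnity s X K), ∀ c x, ρ c x ≠ 0 → dist x c < ε := by
  obtain ⟨s, -, hs⟩ := hK.elim_nhds_subcover (fun x => Metric.ball x ε)
    fun x _ => Metric.ball_mem_nhds x hε
  obtain ⟨ρ, hρ⟩ := PartitionOfUnity.exists_isSubordinate hK.isClosed
    (fun c : s => Metric.ball (c : X) ε) (fun c => Metric.isOpen_ball)
      (hs.trans (iUnion₂_subset fun c hc => subset_iUnion_of_subset ⟨c, hc⟩ subset_rfl))
  exact ⟨s, ρ, fun c x hx => hρ c (subset_tsupport _ hx)⟩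

theorem sum_enorm_partitionOfUnity_le_one {ι X : Type*} [Fintype ι] [TopologicalSpace X] {K : Set X}
    (ρ : PartitionOfUnity ι X K) (x : X) : ∑ c, ‖ρ c x‖ₑ ≤ 1 := by
  simp only [fun c => Real.enorm_eq_ofReal (ρ.nonneg c x)]
  rw [← ENNReal.ofReal_sum_of_nonneg fun c _ => ρ.nonneg c x, ENNReal.ofReal_le_one,
    ← finsum_eq_sum_of_fintype]
  exact ρ.sum_le_one x

variable {X Y : Type*} [MetricSpace X] [MeasurableSpace X] [MetricSpace Y] [MeasurableSpace Y]
  [BorelSpace X] [BorelSpace Y] {μ : Measure X} {ν : Measure Y} {K : Set X} {L : Set Y}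
  {Z : Set (X × Y)} {C : ℝ≥0∞} {B : C(X, ℝ) →+ C(Y, ℝ) →+ ℝ} {ε : ℝ}

theorem lintegral_enorm_one_sub_sum_eq_zero {ι : Type*} [Fintype ι]
    (ρ : PartitionOfUnity ι X K) (hμ : μ Kᶜ = 0) : ∫⁻ x, ‖(1 - ∑ c, ρ c) x‖ₑ ∂μ = 0 := by
  rw [lintegral_eq_zero_iff (map_continuous _).measurable.enorm]
  filter_upwards [measure_eq_zero_iff_ae_notMem.1 hμ] with x hx
  have hsum := ρ.sum_eq_one (notMem_compl_iff.1 hx)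
  rw [finsum_eq_sum_of_fintype] at hsum
  simp [hsum]

theorem biadditive_apply_one_one_eq_sum {ι κ : Type*} [Fintype ι] [Fintype κ]
    (hB : ∀ φ ψ, ‖B φ ψ‖ₑ ≤ C * ((∫⁻ x, ‖φ x‖ₑ ∂μ) * ∫⁻ y, ‖ψ y‖ₑ ∂ν))
    (ρ : PartitionOfUnity ι X K) (σ : PartitionOfUnity κ Y L) (hμ : μ Kᶜ = 0) (hν : ν Lᶜ = 0) :
    B 1 1 = ∑ c, ∑ d, B (ρ c) (σ d) := by
  have hleft : ∀ ψ, B (1 - ∑ c, ρ c) ψ = 0 := fun ψ => by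
    have hle := hB (1 - ∑ c, ρ c) ψ
    rwa [lintegral_enorm_one_sub_sum_eq_zero ρ hμ, zero_mul, mul_zero, nonpos_iff_eq_zero,
      enorm_eq_zero] at hle
  have hright : ∀ φ, B φ (1 - ∑ d, σ d) = 0 := fun φ => by
    have hle := hB φ (1 - ∑ d, σ d)
    rwa [lintegral_enorm_one_sub_sum_eq_zero σ hν, mul_zero, mul_zero, nonpos_iff_eq_zero,
      enorm_eq_zero] at hle
  simp only [map_sub, AddMonoidHom.sub_apply, map_sum, AddMonoidHom.finsetSum_apply,
    sub_eq_zero] at hleft hright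
  simp only [hleft, hright]

theorem enorm_biadditive_apply_le_setLIntegral_cthickening [SFinite ν]
    (hB : ∀ φ ψ, ‖B φ ψ‖ₑ ≤ C * ((∫⁻ x, ‖φ x‖ₑ ∂μ) * ∫⁻ y, ‖ψ y‖ₑ ∂ν))
    (hlocal : ∀ φ ψ, (∀ z ∈ Z, ∀ x ∈ Metric.ball z.1 ε, ∀ y ∈ Metric.ball z.2 ε, φ x * ψ y = 0) →
      B φ ψ = 0) {φ : C(X, ℝ)} {ψ : C(Y, ℝ)} {c : X} {d : Y} (hφ : ∀ x, φ x ≠ 0 → dist x c < ε)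
    (hψ : ∀ y, ψ y ≠ 0 → dist y d < ε) :
    ‖B φ ψ‖ₑ ≤ C * ∫⁻ z in Metric.cthickening (3 * ε) Z, ‖φ z.1‖ₑ * ‖ψ z.2‖ₑ ∂μ.prod ν := by
  by_cases hfar : ∀ z ∈ Z, ∀ x ∈ Metric.ball z.1 ε, ∀ y ∈ Metric.ball z.2 ε, φ x * ψ y = 0
  · simp [hlocal φ ψ hfar]
  push Not at hfar
  obtain ⟨z, hz, x, hx, y, hy, hxy⟩ := hfar
  have hsupport : (fun w : X × Y => ‖φ w.1‖ₑ * ‖ψ w.2‖ₑ).support ⊆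
      Metric.cthickening (3 * ε) Z := fun w hw => by
    refine Metric.mem_cthickening_of_dist_le w z _ _ hz (max_le ?_ ?_)
    · linarith [hφ x (left_ne_zero_of_mul hxy), Metric.mem_ball.1 hx, dist_triangle4 w.1 c x z.1,
        hφ w.1 (enorm_ne_zero.1 (left_ne_zero_of_mul hw)), dist_comm x c]
    · linarith [hψ y (right_ne_zero_of_mul hxy), Metric.mem_ball.1 hy, dist_triangle4 w.2 d y z.2,
        hψ w.2 (enorm_ne_zero.1 (right_ne_zero_of_mul hw)), dist_comm y d]
  rw [setLIntegral_eq_of_support_subset hsupport, lintegral_prod_mul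
    φ.continuous.measurable.enorm.aemeasurable ψ.continuous.measurable.enorm.aemeasurable]
  exact hB φ ψ

theorem biadditive_apply_one_one_eq_zero [ProperSpace X] [ProperSpace Y] [IsFiniteMeasure μ]
    [IsFiniteMeasure ν] (hC : C ≠ ⊤)
    (hB : ∀ φ ψ, ‖B φ ψ‖ₑ ≤ C * ((∫⁻ x, ‖φ x‖ₑ ∂μ) * ∫⁻ y, ‖ψ y‖ₑ ∂ν))
    (hK : IsCompact K) (hμ : μ Kᶜ = 0) (hL : IsCompact L) (hν : ν Lᶜ = 0)
    (hZ : IsCompact Z) (hnull : (μ.prod ν) Z = 0)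
    (hlocal : ∀ δ > 0, ∀ φ ψ,
      (∀ z ∈ Z, ∀ x ∈ Metric.ball z.1 δ, ∀ y ∈ Metric.ball z.2 δ, φ x * ψ y = 0) → B φ ψ = 0) :
    B 1 1 = 0 := by
  have hbound : ∀ ε > 0, ‖B 1 1‖ₑ ≤ C * (μ.prod ν) (Metric.cthickening (3 * ε) Z) := by
    intro ε hε
    obtain ⟨s, ρ, hρ⟩ := exists_partitionOfUnity_dist_lt hK hε
    obtain ⟨t, σ, hσ⟩ := exists_partitionOfUnity_dist_lt hL hε
    set T := Metric.cthickening (3 * ε) Z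
    have hmeas : ∀ c d, Measurable fun z : X × Y => ‖ρ c z.1‖ₑ * ‖σ d z.2‖ₑ := fun c d =>
      ((ρ c).continuous.measurable.comp measurable_fst).enorm.mul
        ((σ d).continuous.measurable.comp measurable_snd).enorm
    calc ‖B 1 1‖ₑ = ‖∑ c, ∑ d, B (ρ c) (σ d)‖ₑ := by
          rw [biadditive_apply_one_one_eq_sum hB ρ σ hμ hν]
      _ ≤ ∑ c, ∑ d, ‖B (ρ c) (σ d)‖ₑ :=
          (enorm_sum_le _ _).trans (Finset.sum_le_sum fun c _ => enorm_sum_le _ _)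
      _ ≤ ∑ c, ∑ d, C * ∫⁻ z in T, ‖ρ c z.1‖ₑ * ‖σ d z.2‖ₑ ∂μ.prod ν :=
          Finset.sum_le_sum fun c _ => Finset.sum_le_sum fun d _ =>
            enorm_biadditive_apply_le_setLIntegral_cthickening hB (hlocal ε hε) (hρ c) (hσ d)
      _ = C * ∫⁻ z in T, ∑ c, ∑ d, ‖ρ c z.1‖ₑ * ‖σ d z.2‖ₑ ∂μ.prod ν := by
          rw [lintegral_finsetSum _ fun c _ => Finset.measurable_fun_sum _ fun d _ => hmeas c d]
          simp only [lintegral_finsetSum _ fun d _ => hmeas _ d, Finset.mul_sum]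
      _ ≤ C * ∫⁻ _ in T, 1 ∂μ.prod ν := by
          refine mul_le_mul_right (lintegral_mono fun z => ?_) C
          rw [← Finset.sum_mul_sum]
          exact mul_le_one' (sum_enorm_partitionOfUnity_le_one ρ z.1)
            (sum_enorm_partitionOfUnity_le_one σ z.2)
      _ = C * (μ.prod ν) T := by rw [setLIntegral_one]
  have hthick : Tendsto (fun ε : ℝ => 3 * ε) (𝓝[>] 0) (𝓝 0) :=
    ((continuous_const_mul 3).tendsto' 0 0 (mul_zero 3)).mono_left nhdsWithin_le_nhds
  have hlim : Tendsto (fun ε : ℝ => C * (μ.prod ν) (Metric.cthickening (3 * ε) Z)) (𝓝[>] 0)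
      (𝓝 (C * (μ.prod ν) Z)) :=
    ENNReal.Tendsto.const_mul ((tendsto_measure_cthickening_of_isCompact hZ).comp hthick)
      (Or.inr hC)
  rw [hnull, mul_zero] at hlim
  exact enorm_eq_zero.1 (le_antisymm
    (ge_of_tendsto hlim (eventually_mem_nhdsWithin.mono hbound)) zero_le)

end Biadditive

/-! ### Signatures of thinly homotopic paths -/

section AdjacentWeights

variable {V : ℝ≥0} {γ α β : ℝ → Fin n → ℝ} {X : Set (Fin n → ℝ)} {δ ε : ℝ}
  {a b : WeightedLetter n}

theorem SeparatedAlong.anti (hab : SeparatedAlong X δ a b) (hε : ε ≤ δ) : SeparatedAlong X ε a b :=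
  fun x hx s hs t ht => hab x hx s (Metric.ball_subset_ball hε hs) t (Metric.ball_subset_ball hε ht)

theorem SeparatedAlong.mul_left (hab : SeparatedAlong X δ a b) (φ : C(ℝ, ℝ)) :
    SeparatedAlong X δ (a.1, a.2 * φ) b := fun x hx s hs t ht => by
  rw [ContinuousMap.mul_apply, mul_right_comm, hab x hx s hs t ht, zero_mul]

/-- The iterated integral of `u ++ a :: b :: v` as a biadditive function of two factors by which the
weights of the adjacent letters `a` and `b` are multiplied. -/
def adjacentIterInt (hγ : LipschitzWith V γ) (u v : List (WeightedLetter n))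
    (a b : WeightedLetter n) : C(ℝ, ℝ) →+ C(ℝ, ℝ) →+ ℝ :=
  AddMonoidHom.mk'
    (fun φ => AddMonoidHom.mk'
      (fun ψ => weightedIterInt γ (u ++ (a.1, a.2 * φ) :: (b.1, b.2 * ψ) :: v) 1)
      fun ψ ψ' => by
        have hadd := weightedIterInt_append_cons_add hγ (u ++ [(a.1, a.2 * φ)]) v b.1
          (b.2 * ψ) (b.2 * ψ') 1
        simpa only [mul_add, List.append_assoc, List.singleton_append] using hadd)
    fun φ φ' => AddMonoidHom.ext fun ψ => by
      simp only [AddMonoidHom.mk'_apply, AddMonoidHom.add_apply, mul_add,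
        weightedIterInt_append_cons_add hγ]

theorem enorm_adjacentIterInt_le (hγ : LipschitzWith V γ) (u v : List (WeightedLetter n))
    (a b : WeightedLetter n) (φ ψ : C(ℝ, ℝ)) :
    ‖adjacentIterInt hγ u v a b φ ψ‖ₑ ≤ ((u ++ v).map fun c => letterMeasure γ c univ).prod *
      ((∫⁻ x, ‖φ x‖ₑ ∂letterMeasure γ a) * ∫⁻ y, ‖ψ y‖ₑ ∂letterMeasure γ b) := by
  refine (enorm_weightedIterInt_le hγ _ (right_mem_Icc.2 zero_le_one)).trans_eq ?_
  simp only [List.map_append, List.map_cons, List.prod_append, List.prod_cons,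
    letterMeasure_mul_univ hγ]
  ring

theorem letterMeasure_add_letterMeasure_absolutelyContinuous (hα : LipschitzWith V α)
    (hβ : LipschitzWith V β) (a : WeightedLetter n) :
    letterMeasure α a + letterMeasure β a ≪ volume :=
  Measure.AbsolutelyContinuous.add_left (letterMeasure_absolutelyContinuous hα a)
    (letterMeasure_absolutelyContinuous hβ a)

theorem letterMeasure_add_letterMeasure_compl_image (hα : LipschitzWith V α)
    (hβ : LipschitzWith V β) (a : WeightedLetter n) :
    (letterMeasure α a + letterMeasure β a)
      ((fun x => x a.1) '' (α '' Icc 0 1 ∪ β '' Icc 0 1))ᶜ = 0 := by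
  rw [Measure.add_apply, add_eq_zero, image_union, image_image, image_image, compl_union]
  exact ⟨measure_mono_null inter_subset_left (letterMeasure_compl_image hα a),
    measure_mono_null inter_subset_right (letterMeasure_compl_image hβ a)⟩

theorem volume_image_pair_eq_zero (hα : LipschitzWith V α) (hβ : LipschitzWith V β) (i j : Fin n) :
    volume ((fun x => (x i, x j)) '' (α '' Icc 0 1 ∪ β '' Icc 0 1)) = 0 := by
  have hpair : ∀ {γ : ℝ → Fin n → ℝ}, LipschitzWith V γ →
      volume ((fun t => (γ t i, γ t j)) '' Icc 0 1) = 0 := fun hγ =>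
    volume_image_eq_zero_of_lipschitzOnWith
      ((lipschitzWith_coord hγ i).prodMk (lipschitzWith_coord hγ j)).lipschitzOnWith
  rw [image_union, image_image, image_image]
  exact measure_union_null (hpair hα) (hpair hβ)

theorem prod_map_letterMeasure_univ_ne_top (hγ : LipschitzWith V γ) (w : List (WeightedLetter n)) :
    (w.map fun a => letterMeasure γ a univ).prod ≠ ⊤ := by
  refine List.prod_induction (· ≠ ⊤) (fun _ _ => ENNReal.mul_ne_top) ENNReal.one_ne_top ?_
  simp only [List.mem_map, forall_exists_index, and_imp, forall_apply_eq_imp_iff₂]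
  exact fun a _ => (isFiniteMeasure_letterMeasure hγ a).measure_univ_lt_top.ne

theorem adjacentIterInt_one_one_eq (hα : LipschitzWith V α) (hβ : LipschitzWith V β)
    {u v : List (WeightedLetter n)}
    (hsep : ∀ δ > 0, ∀ φ ψ : C(ℝ, ℝ),
      SeparatedAlong (α '' Icc 0 1 ∪ β '' Icc 0 1) δ (a.1, a.2 * φ) (b.1, b.2 * ψ) →
        adjacentIterInt hα u v a b φ ψ = adjacentIterInt hβ u v a b φ ψ) :
    adjacentIterInt hα u v a b 1 1 = adjacentIterInt hβ u v a b 1 1 := by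
  have := isFiniteMeasure_letterMeasure hα
  have := isFiniteMeasure_letterMeasure hβ
  set X := α '' Icc 0 1 ∪ β '' Icc 0 1
  have hX : IsCompact X :=
    (isCompact_Icc.image hα.continuous).union (isCompact_Icc.image hβ.continuous)
  set Mα := ((u ++ v).map fun c => letterMeasure α c univ).prod
  set Mβ := ((u ++ v).map fun c => letterMeasure β c univ).prod
  have hac := (letterMeasure_add_letterMeasure_absolutelyContinuous hα hβ a).prod
    (letterMeasure_add_letterMeasure_absolutelyContinuous hα hβ b)
  refine sub_eq_zero.1 (biadditive_apply_one_one_eq_zero (C := Mα + Mβ)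
    (B := adjacentIterInt hα u v a b - adjacentIterInt hβ u v a b)
    (ENNReal.add_ne_top.2 ⟨prod_map_letterMeasure_univ_ne_top hα _,
      prod_map_letterMeasure_univ_ne_top hβ _⟩) (fun φ ψ => ?_)
    (hX.image (continuous_apply a.1)) (letterMeasure_add_letterMeasure_compl_image hα hβ a)
    (hX.image (continuous_apply b.1)) (letterMeasure_add_letterMeasure_compl_image hα hβ b)
    (hX.image (f := fun x => (x a.1, x b.1)) (by fun_prop))
    (hac (volume_image_pair_eq_zero hα hβ a.1 b.1)) fun δ hδ φ ψ h => ?_)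
  · rw [AddMonoidHom.sub_apply, AddMonoidHom.sub_apply, add_mul, lintegral_add_measure,
      lintegral_add_measure]
    refine enorm_sub_le.trans (add_le_add ?_ ?_)
    · refine (enorm_adjacentIterInt_le hα u v a b φ ψ).trans ?_
      gcongr <;> exact le_self_add
    · refine (enorm_adjacentIterInt_le hβ u v a b φ ψ).trans ?_
      gcongr <;> exact le_add_self
  · refine sub_eq_zero.2 (hsep δ hδ φ ψ fun x hx s hs t ht => ?_)
    have hzero := h _ (mem_image_of_mem _ hx) s hs t ht
    simp only [ContinuousMap.mul_apply]
    linear_combination a.2 s * b.2 t * hzero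

theorem adjacentIterInt_one_one (hγ : LipschitzWith V γ) (u v : List (WeightedLetter n))
    (a b : WeightedLetter n) :
    adjacentIterInt hγ u v a b 1 1 = weightedIterInt γ (u ++ a :: b :: v) 1 := by
  simp [adjacentIterInt]

end AdjacentWeights

section ThinInvariance

variable {V : ℝ≥0} {α β : ℝ → Fin n → ℝ} {p : Fin n → ℝ} {η : ℝ × ℝ → Fin n → ℝ}

theorem IsThinHomotopy.weightedIterInt_append_eq (hη : IsThinHomotopy p α β η)
    (hα : LipschitzWith V α) (hβ : LipschitzWith V β) (u v : List (WeightedLetter n))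
    (hv : ∃ δ > 0, v.IsChain (SeparatedAlong (α '' Icc 0 1 ∪ β '' Icc 0 1) δ)) :
    weightedIterInt α (u ++ v) 1 = weightedIterInt β (u ++ v) 1 := by
  induction u using List.reverseRecOn generalizing v with
  | nil =>
    obtain ⟨δ, hδ, hv⟩ := hv
    exact hη.weightedIterInt_eq hα hβ hδ hv
  | append_singleton u a ih =>
    rw [List.append_assoc, List.singleton_append]
    obtain ⟨δ, hδ, hv⟩ := hv
    rcases v with _ | ⟨b, v⟩
    · exact ih [a] ⟨1, one_pos, List.isChain_singleton a⟩
    rw [← adjacentIterInt_one_one hα, ← adjacentIterInt_one_one hβ]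
    refine adjacentIterInt_one_one_eq hα hβ fun ε hε φ ψ hsep => ih _ ⟨min δ ε, lt_min hδ hε, ?_⟩
    have hv' := hv.imp fun _ _ h => h.anti (min_le_left δ ε)
    refine List.isChain_cons_cons.2 ⟨hsep.anti (min_le_right δ ε), ?_⟩
    rcases v with _ | ⟨c, v⟩
    · exact List.isChain_singleton _
    · exact List.isChain_cons_cons.2
        ⟨(List.isChain_cons_cons.1 hv').1.mul_left ψ, (List.isChain_cons_cons.1 hv').2⟩

theorem IsThinHomotopy.chenS_one_eq (hη : IsThinHomotopy p α β η) (hα : LipschitzWith V α)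
    (hβ : LipschitzWith V β) (w : List (Fin n)) : chenS α w 1 = chenS β w 1 := by
  simpa only [List.append_nil, weightedIterInt_map_one] using
    hη.weightedIterInt_append_eq hα hβ (w.map fun i => (i, 1)) [] ⟨1, one_pos, List.isChain_nil⟩

end ThinInvariance

/-! ### Lipschitz loops -/

section LipschitzLoops

variable {p : Fin n → ℝ} {α β α' β' : ℝ → Fin n → ℝ} {η : ℝ × ℝ → Fin n → ℝ}

/-- Loops at `p` that are Lipschitz on `[0, 1]`: the weakest regularity under which the argument
works, every piecewise smooth loop having it. -/
def IsLipschitzLoop (p : Fin n → ℝ) (γ : ℝ → Fin n → ℝ) : Prop :=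
  (∃ V : ℝ≥0, LipschitzOnWith V γ (Icc 0 1)) ∧ γ 0 = p ∧ γ 1 = p

theorem exists_lipschitzWith_eqOn {V W : ℝ≥0} (hα : LipschitzOnWith V α (Icc 0 1))
    (hβ : LipschitzOnWith W β (Icc 0 1)) :
    ∃ α' β', LipschitzWith (max V W) α' ∧ LipschitzWith (max V W) β' ∧
      EqOn α α' (Icc 0 1) ∧ EqOn β β' (Icc 0 1) := by
  obtain ⟨α', hα', hαα'⟩ := (hα.weaken (le_max_left V W)).extend_pi
  obtain ⟨β', hβ', hββ'⟩ := (hβ.weaken (le_max_right V W)).extend_pi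
  exact ⟨α', β', hα', hβ', hαα', hββ'⟩

theorem chenS_congr (h : EqOn α β (Icc 0 1)) (w : List (Fin n)) {t : ℝ}
    (ht : t ∈ Icc (0 : ℝ) 1) : chenS α w t = chenS β w t := by
  induction w generalizing t with
  | nil => rfl
  | cons i w ih =>
    refine integral_congr_uIoo fun s hs => ?_
    rw [uIoo_of_le ht.1] at hs
    have hs' : s ∈ Ioo (0 : ℝ) 1 := ⟨hs.1, hs.2.trans_le ht.2⟩
    have hnhds : (fun u => α u i) =ᶠ[𝓝 s] fun u => β u i :=
      (h.eventuallyEq_of_mem (Icc_mem_nhds hs'.1 hs'.2)).fun_comp (· i)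
    rw [ih (Ioo_subset_Icc_self hs'), pathDeriv, pathDeriv, hnhds.deriv_eq]

theorem IsThinHomotopy.congr (hη : IsThinHomotopy p α β η) (hα : EqOn α α' (Icc 0 1))
    (hβ : EqOn β β' (Icc 0 1)) : IsThinHomotopy p α' β' η := by
  obtain ⟨hcont, h0, h1, hends, himage⟩ := hη
  refine ⟨hcont, fun t ht => (h0 t ht).trans (hα ht), fun t ht => (h1 t ht).trans (hβ ht), hends,
    ?_⟩
  rwa [← hα.image_eq, ← hβ.image_eq]

theorem IsThinHomotopy.elemIterInt_eq (hη : IsThinHomotopy p α β η) {V W : ℝ≥0}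
    (hα : LipschitzOnWith V α (Icc 0 1)) (hβ : LipschitzOnWith W β (Icc 0 1))
    (l : List (Fin n)) : elemIterInt α l = elemIterInt β l := by
  obtain ⟨α', β', hα', hβ', hαα', hββ'⟩ := exists_lipschitzWith_eqOn hα hβ
  rw [elemIterInt, elemIterInt, chenS_congr hαα' _ (right_mem_Icc.2 zero_le_one),
    chenS_congr hββ' _ (right_mem_Icc.2 zero_le_one)]
  exact (hη.congr hαα' hββ').chenS_one_eq hα' hβ' _

theorem exists_isThinHomotopy_of_elemIterInt_eq (hα : IsLipschitzLoop p α)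
    (hβ : IsLipschitzLoop p β)
    (h : ∀ l : List (Fin n), l ≠ [] → elemIterInt α l = elemIterInt β l) :
    ∃ η, IsThinHomotopy p α β η := by
  obtain ⟨⟨V, hV⟩, hα0, hα1⟩ := hα
  obtain ⟨⟨W, hW⟩, hβ0, -⟩ := hβ
  obtain ⟨α', β', hα', hβ', hαα', hββ'⟩ := exists_lipschitzWith_eqOn hV hW
  have zero_mem : (0 : ℝ) ∈ Icc (0 : ℝ) 1 := left_mem_Icc.2 zero_le_one
  have one_mem : (1 : ℝ) ∈ Icc (0 : ℝ) 1 := right_mem_Icc.2 zero_le_one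
  have hsig : signatureLift α' 1 = signatureLift β' 1 := by
    funext w
    rcases eq_or_ne w [] with rfl | hw
    · rfl
    simpa only [signatureLift, elemIterInt, List.reverse_reverse, chenS_congr hαα' w one_mem,
      chenS_congr hββ' w one_mem] using h w.reverse (List.reverse_ne_nil_iff.2 hw)
  obtain ⟨η, hη⟩ := exists_isThinHomotopy_of_signatureLift_eq hα' ((hαα' zero_mem).symm.trans hα0)
    ((hαα' one_mem).symm.trans hα1) hβ' ((hββ' zero_mem).symm.trans hβ0) hsig
  exact ⟨η, hη.congr hαα'.symm hββ'.symm⟩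

theorem ThinEquiv.elemIterInt_eq {C : (ℝ → Fin n → ℝ) → Prop}
    (hC : ∀ γ, C γ → IsLipschitzLoop p γ) (h : ThinEquiv C p α β) (l : List (Fin n)) :
    elemIterInt α l = elemIterInt β l := by
  induction h with
  | rel γ δ hγδ =>
    obtain ⟨hγ, hδ, η, hη⟩ := hγδ
    obtain ⟨⟨V, hV⟩, -⟩ := hC γ hγ
    obtain ⟨⟨W, hW⟩, -⟩ := hC δ hδ
    exact hη.elemIterInt_eq hV hW l
  | refl γ => rfl
  | symm γ δ _ ih => exact ih.symm
  | trans γ δ ε _ _ ihγδ ihδε => exact ihγδ.trans ihδε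

theorem signature_faithful_thin_general {C : (ℝ → Fin n → ℝ) → Prop}
    (hC : ∀ γ, C γ → IsLipschitzLoop p γ) (hα : C α) (hβ : C β) :
    (∀ l : List (Fin n), l ≠ [] → elemIterInt α l = elemIterInt β l) ↔ ThinEquiv C p α β :=
  ⟨fun h => .rel _ _ ⟨hα, hβ, exists_isThinHomotopy_of_elemIterInt_eq (hC α hα) (hC β hβ) h⟩,
    fun h l _ => h.elemIterInt_eq hC l⟩

end LipschitzLoops

/-- Two piecewise smooth loops in `ℝⁿ` based at `p` have equal
elementary iterated integrals (for all nonempty index sequences) if and only if they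
are thin equivalent within the class of piecewise smooth loops based at `p`.
(Faithfulness of the Chen signature on piecewise smooth loops mod thin homotopy.) -/
theorem signature_faithful_thin {n : ℕ} (p : Fin n → ℝ) (α β : ℝ → (Fin n → ℝ))
    (hα : PiecewiseSmooth α) (hα0 : α 0 = p) (hα1 : α 1 = p)
    (hβ : PiecewiseSmooth β) (hβ0 : β 0 = p) (hβ1 : β 1 = p) :
    (∀ l : List (Fin n), l ≠ [] → elemIterInt α l = elemIterInt β l) ↔
    ThinEquiv (fun γ => PiecewiseSmooth γ ∧ γ 0 = p ∧ γ 1 = p) p α β :=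
  signature_faithful_thin_general (fun _ hγ => ⟨hγ.1.exists_lipschitzOnWith, hγ.2⟩)
    ⟨hα, hα0, hα1⟩ ⟨hβ, hβ0, hβ1⟩

end ChenPaper
end
end

section
/- Let γ:[0,1]→ℝⁿ be a piecewise smooth path and let (i₁,…,i_k) and (j₁,…,j_l) be index sequences in {1,…,n}. Then ∫_γ dx_{i₁}⋯dx_{i_k} · ∫_γ dx_{j₁}⋯dx_{j_l} = Σ_m ∫_γ dx_{m₁}⋯dx_{m_{k+l}}, where the sum (with multiplicity) runs over the C(k+l,k) sequences (m₁,…,m_{k+l}) obtained by interleaving (i₁,…,i_k) and (j₁,…,j_l) while preserving the relative order within each sequence. In particular, any product of finitely many elementary iterated integrals along γ is a linear combination of elementary iterated integrals along γ. -/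
open Set MeasureTheory intervalIntegral Topology
open scoped Manifold

noncomputable section

namespace ChenPaper

variable {E : Type*} [NormedAddCommGroup E] [NormedSpace ℝ E]

variable {n : ℕ}

/-- The shuffle attached to a subset `S ⊆ Fin p`: the position `t` receives the index `r`
if `t` is the `r`-th smallest element of `S` (`r < S.card`), and the index `S.card + r`
if `t` is the `r`-th smallest element of the complement of `S`. -/
def shuffPerm {p : ℕ} (S : Finset (Fin p)) (t : Fin p) : Fin p :=
  if h : t ∈ S then
    ⟨((S.orderIsoOfFin rfl).symm ⟨t, h⟩ : Fin S.card), by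
      have h1 : (((S.orderIsoOfFin rfl).symm ⟨t, h⟩ : Fin S.card) : ℕ) < S.card :=
        Fin.isLt _
      have h2 : S.card ≤ Fintype.card (Fin p) := S.card_le_univ
      simp only [Fintype.card_fin] at h2
      omega⟩
  else
    ⟨S.card + ((Sᶜ.orderIsoOfFin rfl).symm ⟨t, Finset.mem_compl.mpr h⟩ : Fin Sᶜ.card), by
      have h1 : (((Sᶜ.orderIsoOfFin rfl).symm ⟨t, Finset.mem_compl.mpr h⟩ :
          Fin Sᶜ.card) : ℕ) < Sᶜ.card := Fin.isLt _
      have h2 : S.card + Sᶜ.card = Fintype.card (Fin p) := S.card_add_card_compl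
      simp only [Fintype.card_fin] at h2
      omega⟩

/-!
Both recursions remove the last letter. Write `F_u(t)` for the iterated integral of a word `u` up to
time `t`, so that `F_{ui}' = F_u ω_i` almost everywhere. Integration by parts gives
`F_{ui} F_{vj} = ∫ (F_u F_{vj}) ω_i + ∫ (F_{ui} F_v) ω_j`, which is the recursion of the shuffle
product `ui ⧢ vj = (u ⧢ vj) i + (ui ⧢ v) j`.

For the encoding by subsets `S ⊆ Fin (p + 1)` of positions, the letter in the last position comes
from the first word exactly when `S` contains the last position. If it does, deleting that position
deletes the index `#S - 1` from the concatenation of the two words, which turns `shuffPerm` into a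
`Fin.succAbove`; otherwise it deletes the last index.
-/

theorem intervalIntegral_mul_intervalIntegral {f g : ℝ → ℝ} {a b : ℝ}
    (hf : IntervalIntegrable f volume a b) (hg : IntervalIntegrable g volume a b) :
    (∫ s in a..b, f s) * (∫ s in a..b, g s) =
      (∫ s in a..b, (∫ u in a..s, g u) * f s) + ∫ s in a..b, (∫ u in a..s, f u) * g s := by
  have hF := hf.absolutelyContinuousOnInterval_intervalIntegral (c := a) left_mem_uIcc
  have hG := hg.absolutelyContinuousOnInterval_intervalIntegral (c := a) left_mem_uIcc
  have by_parts := hF.integral_deriv_mul_eq_sub hG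
  simp only [integral_same, mul_zero, sub_zero] at by_parts
  rw [← by_parts, ← integral_add (hf.continuousOn_mul hG.continuousOn)
    (hg.continuousOn_mul hF.continuousOn)]
  refine integral_congr_ae ?_
  filter_upwards [hf.ae_hasDerivAt_integral, hg.ae_hasDerivAt_integral] with x hfx hgx hx
  have hx' := uIoc_subset_uIcc hx
  rw [(hfx hx' a left_mem_uIcc).deriv, (hgx hx' a left_mem_uIcc).deriv, mul_comm (f x)]

theorem intervalIntegrable_deriv_of_contDiffOn_Icc {F : Type*} [NormedAddCommGroup F]
    [NormedSpace ℝ F] {f : ℝ → F} {a b : ℝ} (hab : a < b) (hf : ContDiffOn ℝ 1 f (Icc a b)) :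
    IntervalIntegrable (deriv f) volume a b := by
  have hcont : ContinuousOn (derivWithin f (Icc a b)) (Icc a b) :=
    hf.continuousOn_derivWithin (uniqueDiffOn_Icc hab) le_rfl
  refine (hcont.intervalIntegrable_of_Icc hab.le).congr_uIoo fun t ht ↦ ?_
  rw [uIoo_of_le hab.le] at ht
  exact derivWithin_of_mem_nhds (Icc_mem_nhds ht.1 ht.2)

theorem PiecewiseSmooth.intervalIntegrable_pathDeriv {γ : ℝ → (Fin n → ℝ)}
    (hγ : PiecewiseSmooth γ) (i : Fin n) : IntervalIntegrable (pathDeriv γ i) volume 0 1 := by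
  obtain ⟨k, s, ⟨hs0, hs1, hs⟩, hsmooth⟩ := hγ
  have integrable_up_to (j : Fin (k + 1)) :
      IntervalIntegrable (pathDeriv γ i) volume (s 0) (s j) := by
    induction j using Fin.induction with
    | zero => exact .refl
    | succ j ih =>
      exact ih.trans <| intervalIntegrable_deriv_of_contDiffOn_Icc (hs j.castSucc_lt_succ) <|
        (contDiffOn_pi.1 (hsmooth j) i).of_le (mod_cast le_top)
  simpa only [hs0, hs1] using integrable_up_to (Fin.last k)

/-- The shuffles of two words, i.e. their interleavings preserving the relative order within each
word, counted with multiplicity. The recursion is on the first letter of the result; for index lists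
reversed as in `chenS`, that letter belongs to the outermost integration. -/
def shuffles {α : Type*} : List α → List α → Multiset (List α)
  | [], v => {v}
  | a :: u, [] => {a :: u}
  | a :: u, b :: v => (shuffles u (b :: v)).map (a :: ·) + (shuffles (a :: u) v).map (b :: ·)

section IteratedIntegral

variable {ι : Type*}

/-- The iterated integral `∫_{a ≤ t₁ ≤ ⋯ ≤ t_p ≤ t} ω_{i₁}(t₁) ⋯ ω_{i_p}(t_p)` of a family of
functions. As in `chenS`, the indices are listed as `[i_p, …, i₁]`, so that the recursion removes
the outermost integration. -/
def iteratedIntegral (ω : ι → ℝ → ℝ) (a : ℝ) : List ι → ℝ → ℝ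
  | [], _ => 1
  | i :: l, t => ∫ s in a..t, iteratedIntegral ω a l s * ω i s

theorem chenS_eq_iteratedIntegral (γ : ℝ → (Fin n → ℝ)) (l : List (Fin n)) :
    chenS γ l = iteratedIntegral (pathDeriv γ) 0 l := by
  induction l with
  | nil => rfl
  | cons i l ih => simp only [chenS, iteratedIntegral, ih]

variable {ω : ι → ℝ → ℝ} {a b : ℝ}

theorem continuousOn_iteratedIntegral (hω : ∀ i, IntervalIntegrable (ω i) volume a b) (l : List ι) :
    ContinuousOn (iteratedIntegral ω a l) (uIcc a b) := by
  induction l with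
  | nil => exact continuousOn_const
  | cons i l ih =>
    exact continuousOn_primitive_interval' ((hω i).continuousOn_mul ih) left_mem_uIcc

theorem intervalIntegrable_iteratedIntegral_mul
    (hω : ∀ i, IntervalIntegrable (ω i) volume a b) (l : List ι) (i : ι) :
    IntervalIntegrable (fun s ↦ iteratedIntegral ω a l s * ω i s) volume a b :=
  (hω i).continuousOn_mul (continuousOn_iteratedIntegral hω l)

theorem sum_map_iteratedIntegral_cons
    (hω : ∀ i, IntervalIntegrable (ω i) volume a b) (W : Multiset (List ι)) (i : ι) :
    (W.map fun l ↦ iteratedIntegral ω a (i :: l) b).sum =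
      ∫ s in a..b, (W.map fun l ↦ iteratedIntegral ω a l s).sum * ω i s := by
  induction W using Multiset.induction with
  | empty => simp
  | cons l W ih =>
    have hW : ContinuousOn (fun s ↦ (W.map fun l ↦ iteratedIntegral ω a l s).sum) (uIcc a b) :=
      continuousOn_multiset_sum W fun l _ ↦ continuousOn_iteratedIntegral hω l
    simp only [Multiset.map_cons, Multiset.sum_cons, add_mul]
    rw [ih, integral_add (intervalIntegrable_iteratedIntegral_mul hω l i)
      ((hω i).continuousOn_mul hW), iteratedIntegral]

theorem iteratedIntegral_mul_iteratedIntegral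
    (hω : ∀ i, IntervalIntegrable (ω i) volume a b) (u v : List ι) :
    iteratedIntegral ω a u b * iteratedIntegral ω a v b =
      ((shuffles u v).map fun w ↦ iteratedIntegral ω a w b).sum := by
  induction u, v using shuffles.induct generalizing b with
  | case1 v => simp [shuffles, iteratedIntegral]
  | case2 i u => simp [shuffles, iteratedIntegral]
  | case3 i u j v ihu ihv =>
    have hω' {s : ℝ} (hs : s ∈ uIcc a b) (l : ι) : IntervalIntegrable (ω l) volume a s :=
      (hω l).mono_set (uIcc_subset_uIcc_left hs)
    rw [shuffles, Multiset.map_add, Multiset.sum_add, Multiset.map_map, Multiset.map_map]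
    simp only [Function.comp_def]
    rw [sum_map_iteratedIntegral_cons hω, sum_map_iteratedIntegral_cons hω]
    refine (intervalIntegral_mul_intervalIntegral (intervalIntegrable_iteratedIntegral_mul hω u i)
      (intervalIntegrable_iteratedIntegral_mul hω v j)).trans (congrArg₂ (· + ·) ?_ ?_)
    · refine integral_congr fun s hs ↦ ?_
      simp only [← ihu (hω' hs)]
      rw [iteratedIntegral]
      ring
    · refine integral_congr fun s hs ↦ ?_
      simp only [← ihv (hω' hs)]
      rw [iteratedIntegral]
      ring

end IteratedIntegral

theorem sum_powersetCard_succ_insert {β M : Type*} [DecidableEq β] [AddCommMonoid M] {x : β}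
    {s : Finset β} (hx : x ∉ s) (k : ℕ) (F : Finset β → M) :
    ∑ S ∈ Finset.powersetCard (k + 1) (insert x s), F S =
      ∑ S ∈ Finset.powersetCard k s, F (insert x S) +
        ∑ S ∈ Finset.powersetCard (k + 1) s, F S := by
  have notMem {j : ℕ} {S : Finset β} (hS : S ∈ Finset.powersetCard j s) : x ∉ S :=
    fun h ↦ hx ((Finset.mem_powersetCard.1 hS).1 h)
  have hdisj : Disjoint (Finset.powersetCard (k + 1) s)
      ((Finset.powersetCard k s).image (insert x)) := by
    refine Finset.disjoint_left.2 fun S hS hS' ↦ ?_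
    obtain ⟨T, -, rfl⟩ := Finset.mem_image.1 hS'
    exact notMem hS (Finset.mem_insert_self x T)
  have hinj : InjOn (insert x) (Finset.powersetCard k s : Set (Finset β)) := fun S hS T hT h ↦ by
    rw [← Finset.erase_insert (notMem hS), h, Finset.erase_insert (notMem hT)]
  rw [Finset.powersetCard_succ_insert hx, Finset.sum_union hdisj, Finset.sum_image hinj, add_comm]

theorem orderIsoOfFin_symm_eq_card_filter_lt {β : Type*} [LinearOrder β] (S : Finset β) {k : ℕ}
    (h : S.card = k) (x : S) :
    ((S.orderIsoOfFin h).symm x : ℕ) = (S.filter (· < (x : β))).card := by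
  rw [← Fin.card_Iio, ← Finset.card_map (S.orderEmbOfFin h).toEmbedding]
  congr 1
  ext y
  simp only [Finset.mem_map, Finset.mem_Iio, Finset.mem_filter, OrderIso.lt_symm_apply]
  constructor
  · rintro ⟨j, hj, rfl⟩
    exact ⟨S.orderEmbOfFin_mem h j, hj⟩
  · rintro ⟨hy, hyx⟩
    obtain ⟨j, hj⟩ := (S.orderIsoOfFin h).surjective ⟨y, hy⟩
    exact ⟨j, hj ▸ hyx, congrArg Subtype.val hj⟩

section ShuffPerm

variable {p : ℕ}

theorem shuffPerm_of_mem {S : Finset (Fin p)} {t : Fin p} (ht : t ∈ S) :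
    (shuffPerm S t : ℕ) = (S.filter (· < t)).card := by
  simp only [shuffPerm, ht, ↓reduceDIte, orderIsoOfFin_symm_eq_card_filter_lt]

theorem shuffPerm_add_card_filter_lt_of_notMem {S : Finset (Fin p)} {t : Fin p} (ht : t ∉ S) :
    (shuffPerm S t : ℕ) + (S.filter (· < t)).card = S.card + t := by
  have card_below : (S.filter (· < t)).card + (Sᶜ.filter (· < t)).card = t := by
    rw [← Finset.card_union_of_disjoint (Finset.disjoint_filter_filter disjoint_compl_right),
      ← Finset.filter_union, Finset.union_compl, Finset.filter_gt_eq_Iio, Fin.card_Iio]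
  simp only [shuffPerm, ht, ↓reduceDIte, orderIsoOfFin_symm_eq_card_filter_lt]
  omega

theorem shuffPerm_empty (t : Fin p) : shuffPerm ∅ t = t := by
  simpa [Fin.ext_iff] using shuffPerm_add_card_filter_lt_of_notMem (Finset.notMem_empty t)

theorem shuffPerm_univ (t : Fin p) : shuffPerm Finset.univ t = t := by
  simpa [Fin.ext_iff, Finset.filter_gt_eq_Iio] using shuffPerm_of_mem (Finset.mem_univ t)

theorem card_filter_lt_castSucc_map (S : Finset (Fin p)) (t : Fin p) :
    ((S.map Fin.castSuccEmb).filter (· < t.castSucc)).card = (S.filter (· < t)).card := by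
  simp [Finset.filter_map, Function.comp_def]

theorem card_filter_lt_castSucc_insert_last (S : Finset (Fin p)) (t : Fin p) :
    ((insert (Fin.last p) (S.map Fin.castSuccEmb)).filter (· < t.castSucc)).card =
      (S.filter (· < t)).card := by
  rw [Finset.filter_insert, if_neg (Fin.castSucc_lt_last t).not_gt, card_filter_lt_castSucc_map]

theorem card_filter_lt_last_map (S : Finset (Fin p)) :
    ((S.map Fin.castSuccEmb).filter (· < Fin.last p)).card = S.card := by
  simp [Finset.filter_map, Function.comp_def, Fin.castSucc_lt_last]

theorem last_notMem_map_castSuccEmb (S : Finset (Fin p)) :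
    Fin.last p ∉ S.map Fin.castSuccEmb := by
  simp [Fin.castSucc_ne_last]

theorem sum_powersetCard_univ_fin_succ {M : Type*} [AddCommMonoid M] (k : ℕ)
    (F : Finset (Fin (p + 1)) → M) :
    ∑ S ∈ Finset.powersetCard (k + 1) Finset.univ, F S =
      ∑ S ∈ Finset.powersetCard k Finset.univ, F (insert (Fin.last p) (S.map Fin.castSuccEmb)) +
        ∑ S ∈ Finset.powersetCard (k + 1) Finset.univ, F (S.map Fin.castSuccEmb) := by
  rw [Fin.univ_castSuccEmb, Finset.cons_eq_insert,
    sum_powersetCard_succ_insert (last_notMem_map_castSuccEmb _)]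
  simp only [Finset.powersetCard_map, Finset.sum_map, RelEmbedding.coe_toEmbedding,
    Finset.mapEmbedding_apply]

theorem shuffPerm_map_castSuccEmb_last (S : Finset (Fin p)) :
    shuffPerm (S.map Fin.castSuccEmb) (Fin.last p) = Fin.last p := by
  have h := shuffPerm_add_card_filter_lt_of_notMem (last_notMem_map_castSuccEmb S)
  rw [card_filter_lt_last_map, Finset.card_map] at h
  exact Fin.ext (by omega)

theorem shuffPerm_map_castSuccEmb_castSucc (S : Finset (Fin p)) (t : Fin p) :
    shuffPerm (S.map Fin.castSuccEmb) t.castSucc = (shuffPerm S t).castSucc := by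
  have hmem : t.castSucc ∈ S.map Fin.castSuccEmb ↔ t ∈ S := Finset.mem_map' Fin.castSuccEmb
  have hcard := card_filter_lt_castSucc_map S t
  refine Fin.ext ?_
  rw [Fin.val_castSucc]
  by_cases ht : t ∈ S
  · rw [shuffPerm_of_mem ht, shuffPerm_of_mem (hmem.2 ht), hcard]
  · have h := shuffPerm_add_card_filter_lt_of_notMem ht
    have h' := shuffPerm_add_card_filter_lt_of_notMem (mt hmem.1 ht)
    rw [hcard, Finset.card_map, Fin.val_castSucc] at h'
    omega

theorem shuffPerm_insert_last_last (S : Finset (Fin p)) :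
    (shuffPerm (insert (Fin.last p) (S.map Fin.castSuccEmb)) (Fin.last p) : ℕ) = S.card := by
  rw [shuffPerm_of_mem (Finset.mem_insert_self _ _), Finset.filter_insert, if_neg (lt_irrefl _),
    card_filter_lt_last_map]

theorem shuffPerm_insert_last_castSucc (S : Finset (Fin p)) (t : Fin p) {i : Fin (p + 1)}
    (hi : (i : ℕ) = S.card) :
    shuffPerm (insert (Fin.last p) (S.map Fin.castSuccEmb)) t.castSucc =
      i.succAbove (shuffPerm S t) := by
  have hmem : t.castSucc ∈ insert (Fin.last p) (S.map Fin.castSuccEmb) ↔ t ∈ S := by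
    simp [Fin.castSucc_ne_last]
  have hcard := card_filter_lt_castSucc_insert_last S t
  by_cases ht : t ∈ S
  · have hlt : (S.filter (· < t)).card < S.card :=
      Finset.card_lt_card (Finset.filter_ssubset.2 ⟨t, ht, lt_irrefl t⟩)
    have h := shuffPerm_of_mem ht
    rw [Fin.succAbove_of_castSucc_lt _ _ (Fin.lt_def.2 (by rw [Fin.val_castSucc]; omega))]
    refine Fin.ext ?_
    rw [shuffPerm_of_mem (hmem.2 ht), hcard, Fin.val_castSucc, h]
  · have hle : (S.filter (· < t)).card ≤ t :=
      (Finset.card_le_card (Finset.filter_subset_filter (· < t) S.subset_univ)).trans_eq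
        (by rw [Finset.filter_gt_eq_Iio, Fin.card_Iio])
    have h := shuffPerm_add_card_filter_lt_of_notMem ht
    have h' := shuffPerm_add_card_filter_lt_of_notMem (mt hmem.1 ht)
    rw [hcard, Finset.card_insert_of_notMem (last_notMem_map_castSuccEmb S), Finset.card_map,
      Fin.val_castSucc] at h'
    rw [Fin.succAbove_of_le_castSucc _ _ (Fin.le_def.2 (by rw [Fin.val_castSucc]; omega))]
    refine Fin.ext ?_
    rw [Fin.val_succ]
    omega

end ShuffPerm

section Interleaving

variable {α : Type*} {p : ℕ}

theorem ofFn_comp_succAbove (w : Fin (p + 1) → α) (i : Fin (p + 1)) :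
    List.ofFn (w ∘ i.succAbove) = (List.ofFn w).eraseIdx i := by
  refine List.ext_getElem (by simp [List.length_eraseIdx, i.isLt]) fun m _ _ ↦ ?_
  simp only [List.getElem_ofFn, List.getElem_eraseIdx, Function.comp_apply, Fin.succAbove,
    Fin.lt_def, Fin.val_castSucc]
  split_ifs <;> rfl

theorem ofFn_comp_shuffPerm_map_castSuccEmb (w : Fin (p + 1) → α) (S : Finset (Fin p)) :
    List.ofFn (w ∘ shuffPerm (S.map Fin.castSuccEmb)) =
      List.ofFn ((w ∘ Fin.castSucc) ∘ shuffPerm S) ++ [w (Fin.last p)] := by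
  simp only [List.ofFn_succ', List.concat_eq_append, Function.comp_def,
    shuffPerm_map_castSuccEmb_castSucc, shuffPerm_map_castSuccEmb_last]

theorem ofFn_comp_shuffPerm_insert_last (w : Fin (p + 1) → α) (S : Finset (Fin p))
    {i : Fin (p + 1)} (hi : (i : ℕ) = S.card) :
    List.ofFn (w ∘ shuffPerm (insert (Fin.last p) (S.map Fin.castSuccEmb))) =
      List.ofFn ((w ∘ i.succAbove) ∘ shuffPerm S) ++ [w i] := by
  have hlast : shuffPerm (insert (Fin.last p) (S.map Fin.castSuccEmb)) (Fin.last p) = i :=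
    Fin.ext ((shuffPerm_insert_last_last S).trans hi.symm)
  simp only [List.ofFn_succ', List.concat_eq_append, Function.comp_def,
    shuffPerm_insert_last_castSucc S _ hi, hlast]

theorem ofFn_eq_append_singleton {w : Fin (p + 1) → α} {l : List α} {b : α}
    (hw : List.ofFn w = l ++ [b]) : List.ofFn (w ∘ Fin.castSucc) = l ∧ w (Fin.last p) = b := by
  rw [List.ofFn_succ', List.concat_eq_append] at hw
  simpa [Function.comp_def] using List.append_inj' hw rfl

theorem ofFn_eq_append_cons {w : Fin (p + 1) → α} {l r : List α} {a : α}
    (hw : List.ofFn w = l ++ a :: r) {i : Fin (p + 1)} (hi : (i : ℕ) = l.length) :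
    List.ofFn (w ∘ i.succAbove) = l ++ r ∧ w i = a := by
  constructor
  · rw [ofFn_comp_succAbove, hw, hi, List.eraseIdx_append_of_length_le le_rfl]
    simp
  · have getElem_eq : (List.ofFn w)[(i : ℕ)]? = some a := by
      rw [hw, hi, List.getElem?_append_right le_rfl, Nat.sub_self, List.getElem?_cons_zero]
    simpa only [List.getElem?_ofFn, i.isLt, ↓reduceDIte, Option.some.injEq] using getElem_eq

theorem sum_powersetCard_ofFn_comp_shuffPerm {M : Type*} [AddCommMonoid M] (F : List α → M)
    (u v : List α) (w : Fin p → α) (hw : List.ofFn w = u.reverse ++ v.reverse) :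
    ∑ S ∈ Finset.powersetCard u.length Finset.univ, F (List.ofFn (w ∘ shuffPerm S)).reverse =
      ((shuffles u v).map F).sum := by
  induction u, v using shuffles.induct generalizing p F with
  | case1 v => simp [shuffles, Function.comp_def, shuffPerm_empty, hw]
  | case2 a u =>
    obtain rfl : p = (a :: u).length := by simpa using congrArg List.length hw
    have powersetCard_univ := Finset.powersetCard_self (Finset.univ : Finset (Fin (a :: u).length))
    rw [Finset.card_fin] at powersetCard_univ
    have comp_shuffPerm_univ : w ∘ shuffPerm Finset.univ = w :=
      funext fun t ↦ congrArg w (shuffPerm_univ t)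
    rw [powersetCard_univ, Finset.sum_singleton, comp_shuffPerm_univ, hw]
    simp [shuffles]
  | case3 a u b v ihu ihv =>
    obtain rfl : p = u.length + (v.length + 1) + 1 := by
      have hp := congrArg List.length hw
      simp only [List.length_ofFn, List.length_append, List.length_reverse, List.length_cons] at hp
      omega
    let i : Fin (u.length + (v.length + 1) + 1) := ⟨u.length, by omega⟩
    obtain ⟨ofFn_castSucc, w_last⟩ := ofFn_eq_append_singleton (l := (a :: u).reverse ++ v.reverse)
      (b := b) (by rw [hw, List.reverse_cons (a := b), List.append_assoc])
    obtain ⟨ofFn_remove, w_i⟩ := ofFn_eq_append_cons (l := u.reverse) (r := (b :: v).reverse)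
      (a := a) (i := i) (by rw [hw]; simp) (by simp [i])
    rw [shuffles, Multiset.map_add, Multiset.sum_add, Multiset.map_map, Multiset.map_map,
      List.length_cons, sum_powersetCard_univ_fin_succ, ← ihu (F ∘ (a :: ·)) _ ofFn_remove,
      ← ihv (F ∘ (b :: ·)) _ ofFn_castSucc]
    refine congrArg₂ (· + ·) (Finset.sum_congr rfl fun S hS ↦ ?_)
      (Finset.sum_congr rfl fun S _ ↦ ?_)
    · have hi : (i : ℕ) = S.card := (Finset.mem_powersetCard.1 hS).2.symm
      rw [ofFn_comp_shuffPerm_insert_last w S hi, w_i, List.reverse_concat, Function.comp_apply]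
    · rw [ofFn_comp_shuffPerm_map_castSuccEmb, w_last, List.reverse_concat, Function.comp_apply]

end Interleaving

theorem elemIterInt_mul_shuffle_general {ι : Type*} {ω : ι → ℝ → ℝ} {a b : ℝ}
    (hω : ∀ i, IntervalIntegrable (ω i) volume a b) (il jl : List ι) :
    iteratedIntegral ω a il.reverse b * iteratedIntegral ω a jl.reverse b =
      ∑ S ∈ Finset.powersetCard il.length
          (Finset.univ : Finset (Fin (il.length + jl.length))),
        iteratedIntegral ω a
          (List.ofFn fun t ↦ Fin.append il.get jl.get (shuffPerm S t)).reverse b := by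
  have ofFn_append : List.ofFn (Fin.append il.get jl.get) =
      il.reverse.reverse ++ jl.reverse.reverse := by
    simp only [List.ofFn_fin_append, List.ofFn_get, List.reverse_reverse]
  rw [iteratedIntegral_mul_iteratedIntegral hω,
    ← sum_powersetCard_ofFn_comp_shuffPerm _ _ _ _ ofFn_append, List.length_reverse]
  rfl

/-- **shuffle product.** The product of two elementary iterated integrals
along a piecewise smooth path `γ` is the sum, over the `C(k+l,k)` interleavings of the
two index sequences (encoded by the subsets `S ⊆ Fin (k+l)` of cardinality `k`,
preserving the relative order within each sequence), of elementary iterated integrals.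
In particular any finite product of elementary iterated integrals along `γ` is a linear
combination of elementary iterated integrals along `γ`. -/
theorem elemIterInt_mul_shuffle {n : ℕ} (γ : ℝ → (Fin n → ℝ))
    (hγ : PiecewiseSmooth γ) (il jl : List (Fin n)) :
    elemIterInt γ il * elemIterInt γ jl =
      ∑ S ∈ Finset.powersetCard il.length
          (Finset.univ : Finset (Fin (il.length + jl.length))),
        elemIterInt γ (List.ofFn fun t => Fin.append il.get jl.get (shuffPerm S t)) := by
  simpa only [elemIterInt, chenS_eq_iteratedIntegral] using
    elemIterInt_mul_shuffle_general hγ.intervalIntegrable_pathDeriv il jl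

end ChenPaper
end
end
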